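/- For each n ≥ 1 let G_n be a random simple graph on vertex set {1,…,n}, and let ν_n be the distribution of the graphon W_{G_n}, regarded as a Borel probability measure on the space of graphons equipped with the topology induced by the pseudometric δ_□. Suppose ν_n converges weakly to a Borel probability measure μ on this space. Then limsup_{n→∞} H(G_n)/C(n,2) ≤ sup_{W ∈ supp(μ)} Ent(W), where supp(μ) is the topological support of μ and C(n,2) = n(n-1)/2. -/

import Mathlib

open MeasureTheory Set Filter

noncomputable section

/-- A graphon: a symmetric measurable function `ℝ → ℝ → ℝ` with values in `[0,1]`
(only its values on `[0,1]²` matter). -/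
def IsGraphon (W : ℝ → ℝ → ℝ) : Prop :=
  (∀ x y, W x y = W y x) ∧ Measurable (Function.uncurry W) ∧
    ∀ x y, W x y ∈ Set.Icc (0 : ℝ) 1

/-- The cut norm `‖U‖_□`, the supremum over measurable `S, T ⊆ [0,1]` of
`|∫_{S×T} U|`. -/
def cutNorm (U : ℝ → ℝ → ℝ) : ℝ :=
  sSup { r : ℝ | ∃ S T : Set ℝ, MeasurableSet S ∧ MeasurableSet T ∧
    S ⊆ Set.Icc 0 1 ∧ T ⊆ Set.Icc 0 1 ∧
    r = |∫ p in S ×ˢ T, U p.1 p.2| }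

/-- `d_□(W₁, W₂) = ‖W₁ - W₂‖_□`. -/
def dCut (W₁ W₂ : ℝ → ℝ → ℝ) : ℝ := cutNorm (fun x y => W₁ x y - W₂ x y)

/-- A Lebesgue-measure-preserving map `[0,1] → [0,1]`. -/
def IsMPSelf (σ : ℝ → ℝ) : Prop :=
  MeasureTheory.MeasurePreserving σ
      (MeasureTheory.volume.restrict (Set.Icc (0:ℝ) 1))
      (MeasureTheory.volume.restrict (Set.Icc (0:ℝ) 1)) ∧
    Set.MapsTo σ (Set.Icc (0:ℝ) 1) (Set.Icc (0:ℝ) 1)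

/-- The cut distance `δ_□(W₁, W₂)`. -/
def deltaCut (W₁ W₂ : ℝ → ℝ → ℝ) : ℝ :=
  sInf { r : ℝ | ∃ σ₁ σ₂ : ℝ → ℝ, IsMPSelf σ₁ ∧ IsMPSelf σ₂ ∧
    r = cutNorm (fun x y => W₁ (σ₁ x) (σ₁ y) - W₂ (σ₂ x) (σ₂ y)) }

/-- The binary entropy function `h` (base-2 logarithm; `logb 2 0 = 0` by convention,
so `h 0 = h 1 = 0`). -/
def binEnt (x : ℝ) : ℝ := -x * Real.logb 2 x - (1 - x) * Real.logb 2 (1 - x)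

/-- `h̃ x = h (min x (1/2))`. -/
def htilde (x : ℝ) : ℝ := binEnt (min x (1/2))

/-- The entropy `Ent(W) = ∫₀¹∫₀¹ h(W(x,y)) dx dy` of a graphon. -/
def graphonEnt (W : ℝ → ℝ → ℝ) : ℝ :=
  ∫ x in Set.Icc (0:ℝ) 1, ∫ y in Set.Icc (0:ℝ) 1, binEnt (W x y)

open Classical in
/-- The graphon `W_G` of a simple graph `G` on `{1, …, n}` (vertices as `Fin n`,
vertex `i : Fin n` representing `i+1`): `W_G x y = 1` iff `⌈nx⌉⌈ny⌉ ∈ E(G)`. -/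
def graphonOfGraph {n : ℕ} (G : SimpleGraph (Fin n)) : ℝ → ℝ → ℝ := fun x y =>
  if ∃ i j : Fin n, G.Adj i j ∧ ⌈(n : ℝ) * x⌉ = ((i : ℕ) : ℤ) + 1 ∧
      ⌈(n : ℝ) * y⌉ = ((j : ℕ) : ℤ) + 1
  then 1 else 0

/-- A labelled graph class: a set of graphs on `{1,…,n}` for each `n`. -/
abbrev GraphClass := ∀ n : ℕ, Set (SimpleGraph (Fin n))

/-- A graph class is closed under relabelling by permutations. -/
def IsGraphClass (Q : GraphClass) : Prop :=
  ∀ (n : ℕ) (π : Equiv.Perm (Fin n)) (G : SimpleGraph (Fin n)),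
    G ∈ Q n → G.comap ⇑π ∈ Q n

/-- A hereditary graph class: a graph class closed under taking induced subgraphs
(relabelled by the order-preserving bijection). -/
def IsHereditary (Q : GraphClass) : Prop :=
  IsGraphClass Q ∧
    ∀ (m n : ℕ) (f : Fin m → Fin n), StrictMono f →
      ∀ G ∈ Q n, G.comap f ∈ Q m

/-- `Q̂`: the set of graphons which are limits (in cut distance) of sequences of graphs in
the class `Q` whose orders tend to infinity. -/
def limitSet (Q : GraphClass) : Set (ℝ → ℝ → ℝ) :=
  { W | IsGraphon W ∧
    ∃ (nk : ℕ → ℕ) (Gk : ∀ k, SimpleGraph (Fin (nk k))),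
      (∀ k, Gk k ∈ Q (nk k)) ∧ Filter.Tendsto nk Filter.atTop Filter.atTop ∧
      Filter.Tendsto (fun k => deltaCut (graphonOfGraph (Gk k)) W) Filter.atTop (nhds 0) }

/-- `C(n,2) = n(n-1)/2` as a real number. -/
def choose2 (n : ℕ) : ℝ := (n : ℝ) * ((n : ℝ) - 1) / 2

open Classical in
/-- The step function `E[W | P]` obtained by averaging `W` over the products of the
parts of the partition `P` of `[0,1]`. -/
def condExpPart {k : ℕ} (P : Fin k → Set ℝ) (W : ℝ → ℝ → ℝ) : ℝ → ℝ → ℝ := fun x y =>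
  ∑ i : Fin k, ∑ j : Fin k,
    if x ∈ P i ∧ y ∈ P j then ⨍ p in (P i) ×ˢ (P j), W p.1 p.2 else 0

/-- `W̄_n`: the step function of `W` for the partition of `[0,1]` into `n` consecutive
intervals of length `1/n`. -/
def barStep (n : ℕ) (W : ℝ → ℝ → ℝ) : ℝ → ℝ → ℝ :=
  condExpPart (fun i : Fin n => Set.Ioc (((i : ℕ) : ℝ)/n) ((((i : ℕ) : ℝ) + 1)/n)) W

/-- `N̂_□(n, δ; W)`: the number of graphs `G` on `{1,…,n}` with `d_□(W_G, W) ≤ δ`. -/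
def NhatCut (n : ℕ) (δ : ℝ) (W : ℝ → ℝ → ℝ) : ℕ :=
  Nat.card {G : SimpleGraph (Fin n) // dCut (graphonOfGraph G) W ≤ δ}

/-- `N_□(n, δ; W)`: the number of graphs `G` on `{1,…,n}` with `δ_□(W_G, W) ≤ δ`. -/
def NCut (n : ℕ) (δ : ℝ) (W : ℝ → ℝ → ℝ) : ℕ :=
  Nat.card {G : SimpleGraph (Fin n) // deltaCut (graphonOfGraph G) W ≤ δ}

open Classical in
/-- The induced density `p(F; W)` of a graph `F` on `{1,…,k}` in a graphon `W`. -/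
def inducedDensity {k : ℕ} (F : SimpleGraph (Fin k)) (W : ℝ → ℝ → ℝ) : ℝ :=
  ∫ x : Fin k → ℝ in Set.univ.pi (fun _ : Fin k => Set.Icc (0:ℝ) 1),
    ∏ i : Fin k, ∏ j : Fin k,
      if i < j then (if F.Adj i j then W (x i) (x j) else 1 - W (x i) (x j)) else 1

open Classical in
/-- The randomness support graphon `1_{rand(W)}` of `W`. -/
def randIndicator (W : ℝ → ℝ → ℝ) : ℝ → ℝ → ℝ := fun x y =>
  if 0 < W x y ∧ W x y < 1 then 1 else 0

/-- A kernel `U` is `K_r`-free if `∏_{i<j} U(x_i, x_j) = 0` for a.e. `x ∈ [0,1]^r`. -/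
def KFree (r : ℕ) (U : ℝ → ℝ → ℝ) : Prop :=
  ∀ᵐ x ∂(MeasureTheory.volume.restrict (Set.univ.pi fun _ : Fin r => Set.Icc (0:ℝ) 1)),
    (∏ i : Fin r, ∏ j : Fin r, if i < j then U (x i) (x j) else 1) = 0

open Classical in
/-- The graphon `W^{(r,s)}`: equal to `1/2` off the diagonal blocks, `1` on the first `s`
diagonal blocks `I_i × I_i`, and `0` on the remaining diagonal blocks. -/
def Wrs (r s : ℕ) : ℝ → ℝ → ℝ := fun x y =>
  if ∃ i j : Fin r, i ≠ j ∧ x ∈ Set.Ioc (((i:ℕ):ℝ)/r) ((((i:ℕ):ℝ)+1)/r) ∧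
      y ∈ Set.Ioc (((j:ℕ):ℝ)/r) ((((j:ℕ):ℝ)+1)/r)
  then 1/2
  else if ∃ i : Fin r, (i:ℕ) < s ∧ x ∈ Set.Ioc (((i:ℕ):ℝ)/r) ((((i:ℕ):ℝ)+1)/r) ∧
      y ∈ Set.Ioc (((i:ℕ):ℝ)/r) ((((i:ℕ):ℝ)+1)/r)
  then 1 else 0

/-- `E_r = ⋃_{i ≠ j} I_i × I_j` where `I_i`, `i = 1, …, r`, are the consecutive
intervals of length `1/r` in `[0,1]`. -/
def Er (r : ℕ) : Set (ℝ × ℝ) :=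
  ⋃ (i : Fin r) (j : Fin r) (_ : i ≠ j),
    (Set.Ioc (((i:ℕ):ℝ)/r) ((((i:ℕ):ℝ)+1)/r)) ×ˢ (Set.Ioc (((j:ℕ):ℝ)/r) ((((j:ℕ):ℝ)+1)/r))

/-- `R_r`: the set of graphons equal to `1/2` on `E_r` and `{0,1}`-valued elsewhere
on `[0,1]²`. -/
def Rset (r : ℕ) : Set (ℝ → ℝ → ℝ) :=
  { W | IsGraphon W ∧ (∀ p ∈ Er r, W p.1 p.2 = 1/2) ∧
      ∀ p ∈ ((Set.Icc (0:ℝ) 1) ×ˢ (Set.Icc (0:ℝ) 1)) \ Er r,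
        W p.1 p.2 = 0 ∨ W p.1 p.2 = 1 }

/-- A graphon is random-free if it is `{0,1}`-valued a.e. on `[0,1]²`. -/
def IsRandomFree (W : ℝ → ℝ → ℝ) : Prop :=
  ∀ᵐ p ∂(MeasureTheory.volume.restrict ((Set.Icc (0:ℝ) 1) ×ˢ (Set.Icc (0:ℝ) 1))),
    W (Prod.fst p) (Prod.snd p) = 0 ∨ W (Prod.fst p) (Prod.snd p) = 1


lemma isGraphon_graphonOfGraph {n : ℕ} (G : SimpleGraph (Fin n)) :
    IsGraphon (graphonOfGraph G) := by
  classical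
  refine ⟨fun x y => ?_, ?_, fun x y => ?_⟩
  · have h : (∃ i j : Fin n, G.Adj i j ∧ ⌈(n : ℝ) * x⌉ = ((i : ℕ) : ℤ) + 1 ∧
        ⌈(n : ℝ) * y⌉ = ((j : ℕ) : ℤ) + 1) ↔
        (∃ i j : Fin n, G.Adj i j ∧ ⌈(n : ℝ) * y⌉ = ((i : ℕ) : ℤ) + 1 ∧
        ⌈(n : ℝ) * x⌉ = ((j : ℕ) : ℤ) + 1) := by
      constructor <;> rintro ⟨i, j, hadj, h1, h2⟩ <;> exact ⟨j, i, hadj.symm, h2, h1⟩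
    simp only [graphonOfGraph]
    exact if_congr h rfl rfl
  · have hset : ∀ i j : Fin n,
        MeasurableSet {p : ℝ × ℝ | ⌈(n : ℝ) * p.1⌉ = ((i : ℕ) : ℤ) + 1 ∧
          ⌈(n : ℝ) * p.2⌉ = ((j : ℕ) : ℤ) + 1} := by
      intro i j
      have h1 : {p : ℝ × ℝ | ⌈(n : ℝ) * p.1⌉ = ((i : ℕ) : ℤ) + 1 ∧
          ⌈(n : ℝ) * p.2⌉ = ((j : ℕ) : ℤ) + 1} =
          ((fun x : ℝ => (n : ℝ) * x) ⁻¹' Set.Ioc ((((i:ℕ):ℤ):ℝ) + 1 - 1) ((((i:ℕ):ℤ):ℝ) + 1)) ×ˢ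
          ((fun y : ℝ => (n : ℝ) * y) ⁻¹' Set.Ioc ((((j:ℕ):ℤ):ℝ) + 1 - 1) ((((j:ℕ):ℤ):ℝ) + 1)) := by
        ext p
        simp only [Set.mem_setOf_eq, Set.mem_prod, Set.mem_preimage, Set.mem_Ioc,
          Int.ceil_eq_iff]
        push_cast
        tauto
      rw [h1]
      exact ((measurable_id.const_mul _) measurableSet_Ioc).prod
        ((measurable_id.const_mul _) measurableSet_Ioc)
    have heq : Function.uncurry (graphonOfGraph G) = Set.indicator
        (⋃ (i : Fin n) (j : Fin n) (_ : G.Adj i j),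
          {p : ℝ × ℝ | ⌈(n : ℝ) * p.1⌉ = ((i : ℕ) : ℤ) + 1 ∧
            ⌈(n : ℝ) * p.2⌉ = ((j : ℕ) : ℤ) + 1}) (fun _ => (1:ℝ)) := by
      funext p
      rw [Set.indicator_apply]
      simp only [Function.uncurry, graphonOfGraph]
      refine if_congr ?_ rfl rfl
      simp only [Set.mem_iUnion, Set.mem_setOf_eq]
      tauto
    rw [heq]
    exact Measurable.indicator measurable_const
      (MeasurableSet.iUnion fun i => MeasurableSet.iUnion fun j =>
        MeasurableSet.iUnion fun _ => hset i j)
  · unfold graphonOfGraph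
    split_ifs <;> norm_num


/-- The space of graphons. -/
def Graphon : Type := {W : ℝ → ℝ → ℝ // IsGraphon W}

/-- The topology on the space of graphons induced by the pseudometric `δ_□`
(generated by the open balls). -/
instance : TopologicalSpace Graphon :=
  TopologicalSpace.generateFrom
    { s | ∃ (W₀ : Graphon) (ε : ℝ), 0 < ε ∧ s = { W : Graphon | deltaCut W.1 W₀.1 < ε } }

/-- The Borel σ-algebra on the space of graphons. -/
instance : MeasurableSpace Graphon := borel Graphon

instance (n : ℕ) : MeasurableSpace (SimpleGraph (Fin n)) := ⊤

/-- The graphon `W_G` of `G`, as an element of the space of graphons. -/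
def graphonMap {n : ℕ} (G : SimpleGraph (Fin n)) : Graphon :=
  ⟨graphonOfGraph G, isGraphon_graphonOfGraph G⟩

/-- The entropy `H(G_n)` of a random graph on `{1,…,n}` with distribution `μ`. -/
def graphEntropy {n : ℕ} (μ : Measure (SimpleGraph (Fin n))) : ℝ :=
  ∑ G : SimpleGraph (Fin n), -((μ {G}).toReal * Real.logb 2 (μ {G}).toReal)

/-- The topological support of a measure on the space of graphons. -/
def measSupport (μ : Measure Graphon) : Set Graphon :=
  { W | ∀ s : Set Graphon, IsOpen s → W ∈ s → 0 < μ s }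

/-!
Coding a graphon by a stochastic block model with `m + 1` classes and edge probabilities on a grid
of mesh `1 / (2 m + 2)`, the least expected number of bits per pair of points is a functional `F m`
with values in `[0,1]`. It is continuous for the cut distance, since for a fixed code the code
length is an affine function of the masses of the graphon on pairs of classes. It lies above `Ent`
and converges to it as `m → ∞`, since a graphon is approximated in `L¹` by step functions. For the
graphon of a graph on `n` vertices, the block model can be derandomized into a genuine prefix code,
so `H(G_n) ≤ n log₂ (m + 1) + O_m(1) + n² / 2 * 𝔼 F m (W_{G_n})`. Weak convergence, and then
dominated convergence as `m → ∞`, give `limsup H(G_n) / C(n,2) ≤ ∫ Ent dμ`, and `μ` is carried by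
its support because the topology of the cut distance is coarser than that of the separable space
`L¹([0,1]²)`.
-/

section Entropy

lemma mul_log_sub_log_le_sub {x y : ℝ} (hx : 0 ≤ x) (hy : 0 < y) :
    x * (Real.log y - Real.log x) ≤ y - x := by
  rcases hx.eq_or_lt with rfl | hx
  · simpa using hy.le
  · have h := mul_le_mul_of_nonneg_left (Real.log_le_sub_one_of_pos (div_pos hy hx)) hx.le
    rwa [Real.log_div hy.ne' hx.ne', mul_sub_one, mul_div_cancel₀ _ hx.ne'] at h

lemma mul_log_sub_log_le_mul_div_sub_one {x y : ℝ} (hx : 0 ≤ x) (hy : 0 < y) :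
    x * (Real.log x - Real.log y) ≤ x * (x / y - 1) := by
  rcases hx.eq_or_lt with rfl | hx
  · simp
  · rw [← Real.log_div hx.ne' hy.ne']
    exact mul_le_mul_of_nonneg_left (Real.log_le_sub_one_of_pos (div_pos hx hy)) hx.le

lemma entropy_le_sum_mul_of_kraft {Γ : Type*} [Fintype Γ] {p L : Γ → ℝ} (hp : ∀ g, 0 ≤ p g)
    (hp1 : ∑ g, p g = 1) (hL : ∑ g, (2 : ℝ) ^ (-L g) ≤ 1) :
    ∑ g, -(p g * Real.logb 2 (p g)) ≤ ∑ g, p g * L g := by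
  have hl : 0 < Real.log 2 := Real.log_pos one_lt_two
  have hterm (g : Γ) :
      -(p g * Real.logb 2 (p g)) - p g * L g ≤ ((2 : ℝ) ^ (-L g) - p g) / Real.log 2 := by
    rw [le_div_iff₀ hl]
    have h := mul_log_sub_log_le_sub (hp g) (Real.rpow_pos_of_pos two_pos (-L g))
    rw [Real.log_rpow two_pos] at h
    refine h.trans' (le_of_eq ?_)
    rw [Real.logb]
    field_simp
    ring
  have hsum := Finset.sum_le_sum fun g (_ : g ∈ Finset.univ) => hterm g
  rw [Finset.sum_sub_distrib, ← Finset.sum_div, Finset.sum_sub_distrib, hp1] at hsum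
  exact sub_nonpos.1 (hsum.trans (div_nonpos_of_nonpos_of_nonneg (sub_nonpos.2 hL) hl.le))

-- The competing code first transmits the name of the member of the family, at a cost of
-- `logb 2 (card I)` bits.
lemma entropy_le_logb_card_add_sum_mul {Γ I : Type*} [Fintype Γ] [Fintype I] [Nonempty I]
    {p : Γ → ℝ} (hp : ∀ g, 0 ≤ p g) (hp1 : ∑ g, p g = 1) {L : I → Γ → ℝ}
    (hL : ∀ i, ∑ g, (2 : ℝ) ^ (-L i g) ≤ 1) (sel : Γ → I) :
    ∑ g, -(p g * Real.logb 2 (p g)) ≤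
      Real.logb 2 (Fintype.card I) + ∑ g, p g * L (sel g) g := by
  have hcard : (0 : ℝ) < Fintype.card I := by exact_mod_cast Fintype.card_pos
  have hkraft : ∑ g, (2 : ℝ) ^ (-(Real.logb 2 (Fintype.card I) + L (sel g) g)) ≤ 1 := by
    calc ∑ g, (2 : ℝ) ^ (-(Real.logb 2 (Fintype.card I) + L (sel g) g))
        = ∑ g, (2 : ℝ) ^ (-L (sel g) g) / Fintype.card I := by
          refine Finset.sum_congr rfl fun g _ => ?_
          rw [neg_add', sub_eq_add_neg, Real.rpow_add two_pos, Real.rpow_neg two_pos.le,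
            Real.rpow_logb two_pos one_lt_two.ne' hcard, mul_comm, div_eq_mul_inv]
      _ ≤ ∑ g, (∑ i, (2 : ℝ) ^ (-L i g)) / Fintype.card I := by
          refine Finset.sum_le_sum fun g _ => div_le_div_of_nonneg_right ?_ hcard.le
          exact Finset.single_le_sum (f := fun i => (2 : ℝ) ^ (-L i g))
            (fun i _ => by positivity) (Finset.mem_univ (sel g))
      _ = (∑ i, ∑ g, (2 : ℝ) ^ (-L i g)) / Fintype.card I := by
          rw [← Finset.sum_div, Finset.sum_comm]
      _ ≤ (∑ _i : I, 1) / Fintype.card I :=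
          div_le_div_of_nonneg_right (Finset.sum_le_sum fun i _ => hL i) hcard.le
      _ = 1 := by simp [hcard.ne']
  refine (entropy_le_sum_mul_of_kraft hp hp1 hkraft).trans_eq ?_
  simp_rw [mul_add, Finset.sum_add_distrib, ← Finset.sum_mul, hp1, one_mul]

/-- The cross entropy `-v log₂ u - (1 - v) log₂ (1 - u)`: the expected number of bits spent on a
Bernoulli(`v`) source by the ideal code for Bernoulli(`u`). -/
def binCrossEnt (u v : ℝ) : ℝ := -v * Real.logb 2 u - (1 - v) * Real.logb 2 (1 - u)

lemma binCrossEnt_half (v : ℝ) : binCrossEnt (1 / 2) v = 1 := by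
  have h : Real.logb 2 (1 / 2) = -1 := by
    rw [one_div, Real.logb_inv, Real.logb_self_eq_one one_lt_two]
  norm_num [binCrossEnt, h]

lemma binCrossEnt_sub (u v w : ℝ) :
    binCrossEnt u v - binCrossEnt u w = (v - w) * (Real.logb 2 (1 - u) - Real.logb 2 u) := by
  unfold binCrossEnt
  ring

lemma two_rpow_neg_binCrossEnt_one {u : ℝ} (hu : 0 < u) : (2 : ℝ) ^ (-binCrossEnt u 1) = u := by
  rw [show -binCrossEnt u 1 = Real.logb 2 u by unfold binCrossEnt; ring,
    Real.rpow_logb two_pos one_lt_two.ne' hu]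

lemma two_rpow_neg_binCrossEnt_zero {u : ℝ} (hu : u < 1) :
    (2 : ℝ) ^ (-binCrossEnt u 0) = 1 - u := by
  rw [show -binCrossEnt u 0 = Real.logb 2 (1 - u) by unfold binCrossEnt; ring,
    Real.rpow_logb two_pos one_lt_two.ne' (sub_pos.2 hu)]

lemma measurable_uncurry_binCrossEnt : Measurable (Function.uncurry binCrossEnt) := by
  unfold Function.uncurry binCrossEnt Real.logb
  fun_prop

lemma measurable_binEnt : Measurable binEnt := by
  unfold binEnt Real.logb
  fun_prop

lemma binEnt_eq_binEntropy_div (v : ℝ) : binEnt v = Real.binEntropy v / Real.log 2 := by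
  unfold binEnt Real.binEntropy Real.logb
  rw [Real.log_inv, Real.log_inv]
  ring

lemma binEnt_nonneg {v : ℝ} (hv : v ∈ Icc (0 : ℝ) 1) : 0 ≤ binEnt v := by
  rw [binEnt_eq_binEntropy_div]
  exact div_nonneg (Real.binEntropy_nonneg hv.1 hv.2) (Real.log_pos one_lt_two).le

lemma binEnt_le_one (v : ℝ) : binEnt v ≤ 1 := by
  rw [binEnt_eq_binEntropy_div, div_le_one (Real.log_pos one_lt_two)]
  exact Real.binEntropy_le_log_two

lemma binEnt_le_binCrossEnt {u v : ℝ} (hu : u ∈ Ioo (0 : ℝ) 1) (hv : v ∈ Icc (0 : ℝ) 1) :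
    binEnt v ≤ binCrossEnt u v := by
  have h := entropy_le_sum_mul_of_kraft (p := fun b : Bool => cond b v (1 - v))
    (L := fun b => binCrossEnt u (cond b 1 0))
    (by rintro (_ | _); exacts [sub_nonneg.2 hv.2, hv.1]) (by simp)
    (by simp [two_rpow_neg_binCrossEnt_one hu.1, two_rpow_neg_binCrossEnt_zero hu.2])
  simp only [Fintype.sum_bool, cond_true, cond_false] at h
  refine (le_of_eq ?_).trans (h.trans_eq ?_)
  · unfold binEnt; ring
  · unfold binCrossEnt; ring

lemma binCrossEnt_nonneg {u v : ℝ} (hu : u ∈ Ioo (0 : ℝ) 1) (hv : v ∈ Icc (0 : ℝ) 1) :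
    0 ≤ binCrossEnt u v :=
  (binEnt_nonneg hv).trans (binEnt_le_binCrossEnt hu hv)

lemma binCrossEnt_le_add {u v : ℝ} (hu : u ∈ Ioo (0 : ℝ) 1) (hv : v ∈ Icc (0 : ℝ) 1) :
    binCrossEnt u v ≤ binCrossEnt u 0 + binCrossEnt u 1 := by
  have h₀ := binCrossEnt_nonneg hu (left_mem_Icc.2 zero_le_one)
  have h₁ := binCrossEnt_nonneg hu (right_mem_Icc.2 zero_le_one)
  calc binCrossEnt u v = (1 - v) * binCrossEnt u 0 + v * binCrossEnt u 1 := by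
        unfold binCrossEnt
        ring
    _ ≤ 1 * binCrossEnt u 0 + 1 * binCrossEnt u 1 := by
        gcongr
        exacts [sub_le_self 1 hv.1, hv.2]
    _ = binCrossEnt u 0 + binCrossEnt u 1 := by rw [one_mul, one_mul]

lemma binCrossEnt_le_binEnt_add {u v : ℝ} (hu : u ∈ Ioo (0 : ℝ) 1) (hv : v ∈ Icc (0 : ℝ) 1) :
    binCrossEnt u v ≤ binEnt v + (v - u) ^ 2 / (u * (1 - u)) / Real.log 2 := by
  have hl : 0 < Real.log 2 := Real.log_pos one_lt_two
  have hu1 : 0 < 1 - u := sub_pos.2 hu.2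
  have h₁ := mul_log_sub_log_le_mul_div_sub_one hv.1 hu.1
  have h₀ := mul_log_sub_log_le_mul_div_sub_one (sub_nonneg.2 hv.2) hu1
  rw [← sub_le_iff_le_add', le_div_iff₀ hl]
  calc (binCrossEnt u v - binEnt v) * Real.log 2
      = v * (Real.log v - Real.log u) + (1 - v) * (Real.log (1 - v) - Real.log (1 - u)) := by
        unfold binCrossEnt binEnt Real.logb
        field_simp
        ring
    _ ≤ v * (v / u - 1) + (1 - v) * ((1 - v) / (1 - u) - 1) := add_le_add h₁ h₀
    _ = (v - u) ^ 2 / (u * (1 - u)) := by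
        have := hu.1.ne'
        field_simp
        ring

end Entropy

section GraphCodes

lemma simpleGraph_ext_of_lt {V : Type*} [LinearOrder V] {G H : SimpleGraph V}
    (h : ∀ v w, v < w → (G.Adj v w ↔ H.Adj v w)) : G = H := by
  ext v w
  rcases lt_trichotomy v w with hvw | rfl | hvw
  · exact h v w hvw
  · simp only [SimpleGraph.irrefl]
  · rw [G.adj_comm, H.adj_comm]
    exact h w v hvw

variable {V : Type*} [Fintype V] [LinearOrder V]

open Classical in
/-- The number of bits spent on the graph `G` by the ideal code for the random graph in which the
pairs `v < w` are independent edges with probabilities `q v w`. -/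
def graphCodeLength (q : V → V → ℝ) (G : SimpleGraph V) : ℝ :=
  ∑ e : V × V with e.1 < e.2, binCrossEnt (q e.1 e.2) (G.adjMatrix ℝ e.1 e.2)

open Classical in
lemma two_rpow_neg_graphCodeLength {q : V → V → ℝ} (hq : ∀ v w, q v w ∈ Ioo (0 : ℝ) 1)
    (G : SimpleGraph V) :
    (2 : ℝ) ^ (-graphCodeLength q G) =
      (∏ e : V × V with e.1 < e.2 ∧ G.Adj e.1 e.2, q e.1 e.2) *
        ∏ e : V × V with e.1 < e.2 ∧ ¬ G.Adj e.1 e.2, (1 - q e.1 e.2) := by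
  rw [graphCodeLength, ← Finset.sum_neg_distrib, Real.rpow_sum_of_pos two_pos,
    ← Finset.prod_filter_mul_prod_filter_not _ (fun e => G.Adj e.1 e.2), Finset.filter_filter,
    Finset.filter_filter]
  congr 1 <;> refine Finset.prod_congr rfl fun e he => ?_
  · rw [SimpleGraph.adjMatrix_apply, if_pos (Finset.mem_filter.1 he).2.2,
      two_rpow_neg_binCrossEnt_one (hq _ _).1]
  · rw [SimpleGraph.adjMatrix_apply, if_neg (Finset.mem_filter.1 he).2.2,
      two_rpow_neg_binCrossEnt_zero (hq _ _).2]

lemma sum_two_rpow_neg_graphCodeLength_le_one {q : V → V → ℝ}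
    (hq : ∀ v w, q v w ∈ Ioo (0 : ℝ) 1) :
    ∑ G : SimpleGraph V, (2 : ℝ) ^ (-graphCodeLength q G) ≤ 1 := by
  classical
  let P : Finset (V × V) := {e | e.1 < e.2}
  let weight (t : Finset (V × V)) : ℝ := (∏ e ∈ t, q e.1 e.2) * ∏ e ∈ P \ t, (1 - q e.1 e.2)
  let edges (G : SimpleGraph V) : Finset (V × V) := {e ∈ P | G.Adj e.1 e.2}
  have hinj : Function.Injective edges := fun G H h => simpleGraph_ext_of_lt fun v w hvw => by
    simpa [edges, P, hvw] using Finset.ext_iff.1 h (v, w)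
  have hweight (G : SimpleGraph V) : (2 : ℝ) ^ (-graphCodeLength q G) = weight (edges G) := by
    rw [two_rpow_neg_graphCodeLength hq]
    change _ = (∏ e ∈ P with G.Adj e.1 e.2, _) * ∏ e ∈ P \ {e ∈ P | G.Adj e.1 e.2}, _
    rw [← Finset.filter_not, Finset.filter_filter, Finset.filter_filter]
  have hweight_nonneg (t : Finset (V × V)) : 0 ≤ weight t :=
    mul_nonneg (Finset.prod_nonneg fun e _ => (hq _ _).1.le)
      (Finset.prod_nonneg fun e _ => sub_nonneg.2 (hq _ _).2.le)
  calc ∑ G : SimpleGraph V, (2 : ℝ) ^ (-graphCodeLength q G)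
      = ∑ t ∈ Finset.univ.image edges, weight t := by
        rw [Finset.sum_image hinj.injOn]
        exact Finset.sum_congr rfl fun G _ => hweight G
    _ ≤ ∑ t ∈ P.powerset, weight t := by
        refine Finset.sum_le_sum_of_subset_of_nonneg ?_ fun t _ _ => hweight_nonneg t
        exact Finset.image_subset_iff.2 fun G _ => Finset.mem_powerset.2 (Finset.filter_subset _ _)
    _ = ∏ e ∈ P, (q e.1 e.2 + (1 - q e.1 e.2)) := (Finset.prod_add _ _ P).symm
    _ = 1 := by simp only [add_sub_cancel, Finset.prod_const_one]

-- Off the diagonal, `q` and its transpose together spend each ordered pair exactly once.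
open Classical in
lemma graphCodeLength_add_transpose (q : V → V → ℝ) (G : SimpleGraph V) :
    graphCodeLength q G + graphCodeLength (fun v w => q w v) G =
      ∑ e ∈ Finset.univ.offDiag, binCrossEnt (q e.1 e.2) (G.adjMatrix ℝ e.1 e.2) := by
  have hswap : graphCodeLength (fun v w => q w v) G =
      ∑ e : V × V with e.2 < e.1, binCrossEnt (q e.1 e.2) (G.adjMatrix ℝ e.1 e.2) := by
    refine Finset.sum_equiv (Equiv.prodComm V V) (by simp) fun e _ => ?_
    simp only [Equiv.prodComm_apply, Prod.fst_swap, Prod.snd_swap, SimpleGraph.adjMatrix_apply,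
      G.adj_comm]
  rw [hswap, graphCodeLength, ← Finset.sum_union]
  · refine Finset.sum_congr ?_ fun _ _ => rfl
    ext e
    simp only [Finset.mem_union, Finset.mem_filter_univ, Finset.mem_offDiag, Finset.mem_univ,
      true_and, lt_or_lt_iff_ne]
  · exact Finset.disjoint_filter.2 fun e _ h => h.not_gt

end GraphCodes

section CutNorm

/-- Lebesgue measure on `[0,1]`. -/
abbrev unitMeasure : Measure ℝ := volume.restrict (Icc (0 : ℝ) 1)

/-- Lebesgue measure on `[0,1]²`. -/
abbrev squareMeasure : Measure (ℝ × ℝ) := unitMeasure.prod unitMeasure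

instance : IsProbabilityMeasure unitMeasure := ⟨by simp⟩

lemma volume_restrict_prod_eq_squareMeasure_restrict {S T : Set ℝ} (hS : S ⊆ Icc 0 1)
    (hT : T ⊆ Icc 0 1) :
    (volume : Measure (ℝ × ℝ)).restrict (S ×ˢ T) = squareMeasure.restrict (S ×ˢ T) := by
  rw [← Measure.prod_restrict, Measure.restrict_restrict_of_subset hS,
    Measure.restrict_restrict_of_subset hT, Measure.prod_restrict, Measure.volume_eq_prod]

variable {U U' : ℝ → ℝ → ℝ} {S T : Set ℝ}

lemma integrableOn_prod_of_integrable_squareMeasure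
    (hU : Integrable (fun p => U p.1 p.2) squareMeasure) (hS : S ⊆ Icc 0 1) (hT : T ⊆ Icc 0 1) :
    IntegrableOn (fun p : ℝ × ℝ => U p.1 p.2) (S ×ˢ T) := by
  rw [IntegrableOn, volume_restrict_prod_eq_squareMeasure_restrict hS hT]
  exact hU.restrict

lemma abs_setIntegral_prod_le_integral_abs (hU : Integrable (fun p => U p.1 p.2) squareMeasure)
    (hS : S ⊆ Icc 0 1) (hT : T ⊆ Icc 0 1) :
    |∫ p in S ×ˢ T, U p.1 p.2| ≤ ∫ p, |U p.1 p.2| ∂squareMeasure := by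
  rw [volume_restrict_prod_eq_squareMeasure_restrict hS hT]
  exact abs_integral_le_integral_abs.trans
    (setIntegral_le_integral hU.abs (ae_of_all _ fun _ => abs_nonneg _))

lemma abs_setIntegral_prod_le_cutNorm (hU : Integrable (fun p => U p.1 p.2) squareMeasure)
    (hSm : MeasurableSet S) (hTm : MeasurableSet T) (hS : S ⊆ Icc 0 1) (hT : T ⊆ Icc 0 1) :
    |∫ p in S ×ˢ T, U p.1 p.2| ≤ cutNorm U := by
  refine le_csSup ⟨∫ p, |U p.1 p.2| ∂squareMeasure, ?_⟩ ⟨S, T, hSm, hTm, hS, hT, rfl⟩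
  rintro _ ⟨S', T', -, -, hS', hT', rfl⟩
  exact abs_setIntegral_prod_le_integral_abs hU hS' hT'

lemma cutNorm_le {r : ℝ} (h : ∀ S T : Set ℝ, MeasurableSet S → MeasurableSet T →
    S ⊆ Icc 0 1 → T ⊆ Icc 0 1 → |∫ p in S ×ˢ T, U p.1 p.2| ≤ r) : cutNorm U ≤ r := by
  refine csSup_le ⟨_, ∅, ∅, .empty, .empty, empty_subset _, empty_subset _, rfl⟩ ?_
  rintro _ ⟨S, T, hSm, hTm, hS, hT, rfl⟩
  exact h S T hSm hTm hS hT

lemma cutNorm_nonneg (U : ℝ → ℝ → ℝ) : 0 ≤ cutNorm U := by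
  refine Real.sSup_nonneg ?_
  rintro _ ⟨S, T, -, -, -, -, rfl⟩
  exact abs_nonneg _

lemma cutNorm_neg (U : ℝ → ℝ → ℝ) : cutNorm (fun x y => -U x y) = cutNorm U := by
  simp only [cutNorm, integral_neg, abs_neg]

lemma cutNorm_le_integral_abs (hU : Integrable (fun p => U p.1 p.2) squareMeasure) :
    cutNorm U ≤ ∫ p, |U p.1 p.2| ∂squareMeasure :=
  cutNorm_le fun _ _ _ _ hS hT => abs_setIntegral_prod_le_integral_abs hU hS hT

lemma cutNorm_add_le (hU : Integrable (fun p => U p.1 p.2) squareMeasure)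
    (hU' : Integrable (fun p => U' p.1 p.2) squareMeasure) :
    cutNorm (fun x y => U x y + U' x y) ≤ cutNorm U + cutNorm U' := by
  refine cutNorm_le fun S T hSm hTm hS hT => ?_
  rw [integral_add (integrableOn_prod_of_integrable_squareMeasure hU hS hT)
    (integrableOn_prod_of_integrable_squareMeasure hU' hS hT)]
  exact (abs_add_le _ _).trans (add_le_add (abs_setIntegral_prod_le_cutNorm hU hSm hTm hS hT)
    (abs_setIntegral_prod_le_cutNorm hU' hSm hTm hS hT))

lemma integral_le_setIntegral_pos {α : Type*} [MeasurableSpace α] {ν μ : Measure α} (h : ν ≤ μ)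
    {f : α → ℝ} (hf : Measurable f) (hfi : Integrable f μ) :
    ∫ x, f x ∂ν ≤ ∫ x in {x | 0 < f x}, f x ∂μ := by
  have hpos : MeasurableSet {x | 0 < f x} := measurableSet_lt measurable_const hf
  calc ∫ x, f x ∂ν ≤ ∫ x, {x | 0 < f x}.indicator f x ∂ν := by
        refine integral_mono (hfi.mono_measure h) ((hfi.indicator hpos).mono_measure h) fun x => ?_
        exact le_indicator_apply (fun _ => le_rfl) fun hx => not_lt.1 hx
    _ ≤ ∫ x, {x | 0 < f x}.indicator f x ∂μ :=
        integral_mono_measure h (ae_of_all _ (indicator_nonneg fun x hx => le_of_lt hx))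
          (hfi.indicator hpos)
    _ = ∫ x in {x | 0 < f x}, f x ∂μ := integral_indicator hpos

-- Replacing `ν`, then `ν'`, by the restriction of Lebesgue measure to the set where the partial
-- integral is positive only increases the integral.
lemma integral_prod_le_cutNorm (hUm : Measurable (Function.uncurry U))
    (hU : Integrable (fun p => U p.1 p.2) squareMeasure) {ν ν' : Measure ℝ}
    (hν : ν ≤ unitMeasure) (hν' : ν' ≤ unitMeasure) :
    ∫ p, U p.1 p.2 ∂(ν.prod ν') ≤ cutNorm U := by
  have : IsFiniteMeasure ν := isFiniteMeasure_of_le _ hν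
  have : IsFiniteMeasure ν' := isFiniteMeasure_of_le _ hν'
  let f (x : ℝ) : ℝ := ∫ y, U x y ∂ν'
  let S : Set ℝ := {x | 0 < f x}
  let g (y : ℝ) : ℝ := ∫ x in S, U x y ∂unitMeasure
  let T : Set ℝ := {y | 0 < g y}
  have hf : Measurable f := (hUm.stronglyMeasurable.integral_prod_right (ν := ν')).measurable
  have hg : Measurable g :=
    (hUm.stronglyMeasurable.integral_prod_left (μ := unitMeasure.restrict S)).measurable
  have hS : MeasurableSet S := measurableSet_lt measurable_const hf
  have hT : MeasurableSet T := measurableSet_lt measurable_const hg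
  have hUν' : Integrable (fun p => U p.1 p.2) (unitMeasure.prod ν') :=
    hU.mono_measure (Measure.prod_mono le_rfl hν')
  have hUS : Integrable (fun p => U p.1 p.2) ((unitMeasure.restrict S).prod unitMeasure) :=
    hU.mono_measure (Measure.prod_mono Measure.restrict_le_self le_rfl)
  calc ∫ p, U p.1 p.2 ∂(ν.prod ν')
      = ∫ x, f x ∂ν := integral_prod _ (hUν'.mono_measure (Measure.prod_mono hν le_rfl))
    _ ≤ ∫ x in S, f x ∂unitMeasure := integral_le_setIntegral_pos hν hf hUν'.integral_prod_left
    _ = ∫ y, g y ∂ν' := integral_integral_swap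
        (hUν'.mono_measure (Measure.prod_mono Measure.restrict_le_self le_rfl))
    _ ≤ ∫ y in T, g y ∂unitMeasure := integral_le_setIntegral_pos hν' hg hUS.integral_prod_right
    _ = ∫ p in (S ∩ Icc 0 1) ×ˢ (T ∩ Icc 0 1), U p.1 p.2 := by
        rw [Measure.volume_eq_prod, ← Measure.prod_restrict, ← Measure.restrict_restrict hS,
          ← Measure.restrict_restrict hT, integral_prod_symm _
            (hUS.mono_measure (Measure.prod_mono le_rfl Measure.restrict_le_self))]
    _ ≤ cutNorm U := (le_abs_self _).trans (abs_setIntegral_prod_le_cutNorm hU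
        (hS.inter measurableSet_Icc) (hT.inter measurableSet_Icc) inter_subset_right
        inter_subset_right)

lemma abs_integral_prod_le_cutNorm (hUm : Measurable (Function.uncurry U))
    (hU : Integrable (fun p => U p.1 p.2) squareMeasure) {ν ν' : Measure ℝ}
    (hν : ν ≤ unitMeasure) (hν' : ν' ≤ unitMeasure) :
    |∫ p, U p.1 p.2 ∂(ν.prod ν')| ≤ cutNorm U := by
  refine abs_le'.2 ⟨integral_prod_le_cutNorm hUm hU hν hν', ?_⟩
  rw [← integral_neg, ← cutNorm_neg]
  exact integral_prod_le_cutNorm (U := fun x y => -U x y) hUm.neg hU.neg hν hν'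

end CutNorm

section Graphons

lemma IsGraphon.measurable {W : ℝ → ℝ → ℝ} (hW : IsGraphon W) :
    Measurable (fun p : ℝ × ℝ => W p.1 p.2) := hW.2.1

lemma IsGraphon.mem_Icc {W : ℝ → ℝ → ℝ} (hW : IsGraphon W) (x y : ℝ) : W x y ∈ Icc (0 : ℝ) 1 :=
  hW.2.2 x y

lemma IsGraphon.integrable {W : ℝ → ℝ → ℝ} (hW : IsGraphon W) (μ : Measure (ℝ × ℝ))
    [IsFiniteMeasure μ] : Integrable (fun p => W p.1 p.2) μ :=
  .of_mem_Icc 0 1 hW.measurable.aemeasurable (ae_of_all _ fun _ => hW.mem_Icc _ _)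

lemma IsGraphon.comp {W : ℝ → ℝ → ℝ} (hW : IsGraphon W) {σ : ℝ → ℝ} (hσ : Measurable σ) :
    IsGraphon (fun x y => W (σ x) (σ y)) :=
  ⟨fun _ _ => hW.1 _ _, hW.measurable.comp (hσ.prodMap hσ), fun _ _ => hW.mem_Icc _ _⟩

lemma IsGraphon.integrable_binEnt {W : ℝ → ℝ → ℝ} (hW : IsGraphon W) (μ : Measure (ℝ × ℝ))
    [IsFiniteMeasure μ] : Integrable (fun p => binEnt (W p.1 p.2)) μ :=
  .of_mem_Icc 0 1 (measurable_binEnt.comp hW.measurable).aemeasurable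
    (ae_of_all _ fun _ => ⟨binEnt_nonneg (hW.mem_Icc _ _), binEnt_le_one _⟩)

lemma graphonEnt_eq_integral_squareMeasure {W : ℝ → ℝ → ℝ} (hW : IsGraphon W) :
    graphonEnt W = ∫ p, binEnt (W p.1 p.2) ∂squareMeasure :=
  (integral_prod _ (hW.integrable_binEnt _)).symm

lemma graphonEnt_nonneg {W : ℝ → ℝ → ℝ} (hW : IsGraphon W) : 0 ≤ graphonEnt W :=
  integral_nonneg fun _ => integral_nonneg fun _ => binEnt_nonneg (hW.mem_Icc _ _)

lemma graphonEnt_le_one {W : ℝ → ℝ → ℝ} (hW : IsGraphon W) : graphonEnt W ≤ 1 := by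
  rw [graphonEnt_eq_integral_squareMeasure hW]
  refine (integral_mono (hW.integrable_binEnt _) (integrable_const 1)
    fun _ => binEnt_le_one _).trans_eq ?_
  rw [integral_const, probReal_univ, one_smul]

end Graphons

section CutDistance

lemma isMPSelf_id : IsMPSelf id := ⟨.id _, mapsTo_id _⟩

lemma deltaCut_le (W₁ W₂ : ℝ → ℝ → ℝ) {σ₁ σ₂ : ℝ → ℝ} (h₁ : IsMPSelf σ₁) (h₂ : IsMPSelf σ₂) :
    deltaCut W₁ W₂ ≤ cutNorm (fun x y => W₁ (σ₁ x) (σ₁ y) - W₂ (σ₂ x) (σ₂ y)) := by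
  refine csInf_le ⟨0, ?_⟩ ⟨σ₁, σ₂, h₁, h₂, rfl⟩
  rintro _ ⟨_, _, -, -, rfl⟩
  exact cutNorm_nonneg _

lemma exists_cutNorm_lt_of_deltaCut_lt {W₁ W₂ : ℝ → ℝ → ℝ} {r : ℝ} (h : deltaCut W₁ W₂ < r) :
    ∃ σ₁ σ₂, IsMPSelf σ₁ ∧ IsMPSelf σ₂ ∧
      cutNorm (fun x y => W₁ (σ₁ x) (σ₁ y) - W₂ (σ₂ x) (σ₂ y)) < r := by
  obtain ⟨_, ⟨σ₁, σ₂, h₁, h₂, rfl⟩, hr⟩ :=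
    exists_lt_of_csInf_lt (by exact ⟨_, id, id, isMPSelf_id, isMPSelf_id, rfl⟩) h
  exact ⟨σ₁, σ₂, h₁, h₂, hr⟩

lemma deltaCut_self_le_zero (W : ℝ → ℝ → ℝ) : deltaCut W W ≤ 0 :=
  (deltaCut_le W W isMPSelf_id isMPSelf_id).trans (by simp [cutNorm_le])

lemma deltaCut_le_add_integral_abs {W W' W₀ : ℝ → ℝ → ℝ} (hW : IsGraphon W) (hW' : IsGraphon W')
    (hW₀ : IsGraphon W₀) :
    deltaCut W' W₀ ≤ deltaCut W W₀ + ∫ p, |W' p.1 p.2 - W p.1 p.2| ∂squareMeasure := by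
  refine le_of_forall_pos_lt_add fun ε hε => ?_
  obtain ⟨σ₁, σ₂, h₁, h₂, hr⟩ :=
    exists_cutNorm_lt_of_deltaCut_lt (lt_add_of_pos_right (deltaCut W W₀) hε)
  have hWσ := (hW.comp h₁.1.measurable).integrable squareMeasure
  have hW'σ := (hW'.comp h₁.1.measurable).integrable squareMeasure
  have hW₀σ := (hW₀.comp h₂.1.measurable).integrable squareMeasure
  have hL1 : ∫ p, |W' (σ₁ p.1) (σ₁ p.2) - W (σ₁ p.1) (σ₁ p.2)| ∂squareMeasure =
      ∫ p, |W' p.1 p.2 - W p.1 p.2| ∂squareMeasure := by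
    have hσ : MeasurePreserving (Prod.map σ₁ σ₁) squareMeasure squareMeasure := h₁.1.prod h₁.1
    conv_rhs => rw [← hσ.map_eq]
    exact (integral_map hσ.measurable.aemeasurable
      (hW'.measurable.sub hW.measurable).abs.aestronglyMeasurable).symm
  calc deltaCut W' W₀
      ≤ cutNorm (fun x y => W' (σ₁ x) (σ₁ y) - W₀ (σ₂ x) (σ₂ y)) := deltaCut_le _ _ h₁ h₂
    _ = cutNorm (fun x y => (W (σ₁ x) (σ₁ y) - W₀ (σ₂ x) (σ₂ y)) +
          (W' (σ₁ x) (σ₁ y) - W (σ₁ x) (σ₁ y))) := by congr! 3; ring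
    _ ≤ cutNorm (fun x y => W (σ₁ x) (σ₁ y) - W₀ (σ₂ x) (σ₂ y)) +
          cutNorm (fun x y => W' (σ₁ x) (σ₁ y) - W (σ₁ x) (σ₁ y)) :=
        cutNorm_add_le (hWσ.sub hW₀σ) (hW'σ.sub hWσ)
    _ ≤ cutNorm (fun x y => W (σ₁ x) (σ₁ y) - W₀ (σ₂ x) (σ₂ y)) +
          ∫ p, |W' p.1 p.2 - W p.1 p.2| ∂squareMeasure := by
        rw [← hL1]
        gcongr
        exact cutNorm_le_integral_abs (hW'σ.sub hWσ)
    _ < deltaCut W W₀ + (∫ p, |W' p.1 p.2 - W p.1 p.2| ∂squareMeasure) + ε := by linarith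

end CutDistance

section Couplings

open ProbabilityTheory

-- Lifting along `σ`: resample the second coordinate from its conditional law given `σ a`.
lemma exists_map_prodMap_id_eq {α β Ω : Type*} [MeasurableSpace α] [MeasurableSpace β]
    [MeasurableSpace Ω] [StandardBorelSpace Ω] [Nonempty Ω] {μ : Measure α} [SFinite μ]
    {ρ : Measure (β × Ω)} [IsFiniteMeasure ρ] {σ : α → β} (hσ : MeasurePreserving σ μ ρ.fst) :
    ∃ ρ' : Measure (α × Ω), ρ'.fst = μ ∧ ρ'.map (Prod.map σ id) = ρ := by
  refine ⟨μ ⊗ₘ ρ.condKernel.comap σ hσ.measurable, Measure.fst_compProd _ _, ?_⟩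
  have hmap : Measurable (Prod.map σ (id : Ω → Ω)) := hσ.measurable.prodMap measurable_id
  ext s hs
  rw [Measure.map_apply hmap hs, Measure.compProd_apply (hmap hs)]
  conv_rhs => rw [← ρ.disintegrate ρ.condKernel, Measure.compProd_apply hs, ← hσ.map_eq,
    lintegral_map (Kernel.measurable_kernel_prodMk_left hs) hσ.measurable]
  rfl

lemma integral_eq_sum_setIntegral_fiber {α β : Type*} [MeasurableSpace α] {μ : Measure α}
    [Fintype β] [MeasurableSpace β] [MeasurableSingletonClass β] {κ : α → β} (hκ : Measurable κ)
    {f : α → ℝ} (hf : Integrable f μ) : ∫ x, f x ∂μ = ∑ b, ∫ x in κ ⁻¹' {b}, f x ∂μ := by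
  rw [← integral_iUnion_fintype (fun b => hκ (measurableSet_singleton b))
    (fun a b hab => (disjoint_singleton.2 hab).preimage κ) fun b => hf.integrableOn,
    ← preimage_iUnion, iUnion_of_singleton, preimage_univ, Measure.restrict_univ]

end Couplings

section BlockCodes

/-- A stochastic block model with vertex classes `ι` and edge probabilities in `Q`, used to code a
graphon. The (randomized) class of a point of `[0,1]` is encoded by its joint law with the point,
so that codes can be moved along measure-preserving maps. -/
structure BlockCode (ι : Type*) [MeasurableSpace ι] (Q : Finset (Ioo (0 : ℝ) 1)) where
  joint : Measure (ℝ × ι)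
  fst_joint : joint.fst = unitMeasure
  param : ι → ι → Q

namespace BlockCode

variable {ι : Type*} [MeasurableSpace ι] {Q : Finset (Ioo (0 : ℝ) 1)}

/-- The number of bits the code spends on the pair `p` of labelled points, when an edge between
them is present with probability `W`. -/
def bits (c : BlockCode ι Q) (W : ℝ → ℝ → ℝ) (p : (ℝ × ι) × (ℝ × ι)) : ℝ :=
  binCrossEnt (c.param p.1.2 p.2.2) (W p.1.1 p.2.1)

/-- The expected number of bits per pair of points that the code spends on the graphon `W`. -/
def length (c : BlockCode ι Q) (W : ℝ → ℝ → ℝ) : ℝ :=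
  ∫ p, c.bits W p ∂(c.joint.prod c.joint)

/-- The code in which the point `x` has the deterministic class `κ x`. -/
def ofPartition {κ : ℝ → ι} (hκ : Measurable κ) (u : ι → ι → Q) : BlockCode ι Q where
  joint := unitMeasure.map fun x => (x, κ x)
  fst_joint := by
    rw [Measure.fst_map_prodMk hκ]
    exact Measure.map_id
  param := u

instance [Nonempty ι] [Nonempty Q] : Nonempty (BlockCode ι Q) :=
  ⟨ofPartition (measurable_const (a := Classical.arbitrary ι)) fun _ _ => Classical.arbitrary Q⟩

variable (c : BlockCode ι Q) {W W' : ℝ → ℝ → ℝ}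

instance : IsProbabilityMeasure c.joint :=
  ⟨by rw [← Measure.fst_univ, c.fst_joint, measure_univ]⟩

lemma measurePreserving_fst : MeasurePreserving Prod.fst c.joint unitMeasure :=
  ⟨measurable_fst, c.fst_joint⟩

lemma measurePreserving_fst_prod_fst :
    MeasurePreserving (fun p : (ℝ × ι) × (ℝ × ι) => (p.1.1, p.2.1)) (c.joint.prod c.joint)
      squareMeasure :=
  c.measurePreserving_fst.prod c.measurePreserving_fst

lemma integral_fst_prod_fst {f : ℝ × ℝ → ℝ} (hf : Measurable f) :
    ∫ p, f (p.1.1, p.2.1) ∂(c.joint.prod c.joint) = ∫ p, f p ∂squareMeasure := by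
  rw [← c.measurePreserving_fst_prod_fst.map_eq]
  exact (integral_map c.measurePreserving_fst_prod_fst.measurable.aemeasurable
    hf.aestronglyMeasurable).symm

lemma bits_nonneg (hW : IsGraphon W) (p : (ℝ × ι) × (ℝ × ι)) : 0 ≤ c.bits W p :=
  binCrossEnt_nonneg (Subtype.prop _) (hW.mem_Icc _ _)

lemma length_nonneg (hW : IsGraphon W) : 0 ≤ c.length W :=
  integral_nonneg (c.bits_nonneg hW)

lemma bits_sub_bits (p : (ℝ × ι) × (ℝ × ι)) :
    c.bits W p - c.bits W' p = (W p.1.1 p.2.1 - W' p.1.1 p.2.1) *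
      (Real.logb 2 (1 - c.param p.1.2 p.2.2) - Real.logb 2 (c.param p.1.2 p.2.2)) :=
  binCrossEnt_sub _ _ _

lemma length_comp {c c' : BlockCode ι Q} {σ : ℝ → ℝ} (hσ : Measurable σ)
    (hjoint : c.joint.map (Prod.map σ id) = c'.joint) (hparam : c.param = c'.param)
    (hbits : Measurable (c'.bits W)) :
    c.length (fun x y => W (σ x) (σ y)) = c'.length W := by
  have hmap : Measurable (Prod.map σ (id : ι → ι)) := hσ.prodMap measurable_id
  rw [length, length, ← hjoint, Measure.map_prod_map _ _ hmap hmap,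
    integral_map (hmap.prodMap hmap).aemeasurable hbits.aestronglyMeasurable]
  simp only [bits, hparam, Prod.map_fst, Prod.map_snd, id]

/-- The unnormalized law of the points of class `i`: its mass is the measure of the class. -/
def classMeasure (i : ι) : Measure ℝ := (c.joint.restrict (Prod.snd ⁻¹' {i})).fst

lemma classMeasure_le (i : ι) : c.classMeasure i ≤ unitMeasure := by
  rw [← c.fst_joint]
  exact Measure.map_mono Measure.restrict_le_self measurable_fst

variable [Finite ι] [MeasurableSingletonClass ι]

lemma measurable_bits (hW : IsGraphon W) : Measurable (c.bits W) := by
  have hparam : Measurable fun p : (ℝ × ι) × (ℝ × ι) => (c.param p.1.2 p.2.2 : ℝ) :=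
    (measurable_of_finite fun k : ι × ι => (c.param k.1 k.2 : ℝ)).comp
      (measurable_snd.prodMap measurable_snd)
  exact measurable_uncurry_binCrossEnt.comp
    (hparam.prodMk (hW.measurable.comp (measurable_fst.prodMap measurable_fst)))

lemma integrable_bits (hW : IsGraphon W) (μ : Measure ((ℝ × ι) × (ℝ × ι))) [IsFiniteMeasure μ] :
    Integrable (c.bits W) μ := by
  refine .of_mem_Icc 0 (∑ q : Q, (binCrossEnt q 0 + binCrossEnt q 1))
    (c.measurable_bits hW).aemeasurable (ae_of_all _ fun p => ⟨c.bits_nonneg hW p, ?_⟩)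
  refine (binCrossEnt_le_add (Subtype.prop _) (hW.mem_Icc _ _)).trans ?_
  exact Finset.single_le_sum (f := fun q : Q => binCrossEnt q 0 + binCrossEnt q 1)
    (fun q _ => add_nonneg (binCrossEnt_nonneg q.1.2 (by simp))
      (binCrossEnt_nonneg q.1.2 (by simp))) (Finset.mem_univ _)

lemma graphonEnt_le_length (hW : IsGraphon W) : graphonEnt W ≤ c.length W := by
  rw [graphonEnt_eq_integral_squareMeasure hW,
    ← c.integral_fst_prod_fst (f := fun p => binEnt (W p.1 p.2))
      (measurable_binEnt.comp hW.measurable)]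
  refine integral_mono_of_nonneg (ae_of_all _ fun p => binEnt_nonneg (hW.mem_Icc _ _))
    (c.integrable_bits hW _) (ae_of_all _ fun p => ?_)
  exact binEnt_le_binCrossEnt (Subtype.prop _) (hW.mem_Icc _ _)

end BlockCode

/-- The sum of the absolute log-odds of the parameters in `Q`, which bounds the sensitivity of a
code length to the mass of the graphon on each pair of classes. -/
def sumAbsLogOdds (Q : Finset (Ioo (0 : ℝ) 1)) : ℝ :=
  ∑ q ∈ Q, |Real.logb 2 (1 - q) - Real.logb 2 q|

namespace BlockCode

variable {ι : Type*} [MeasurableSpace ι] {Q : Finset (Ioo (0 : ℝ) 1)} (c : BlockCode ι Q)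
  {W W' : ℝ → ℝ → ℝ} [MeasurableSingletonClass ι]

lemma length_sub_length [Fintype ι] (hW : IsGraphon W) (hW' : IsGraphon W') :
    c.length W - c.length W' = ∑ k : ι × ι,
      (∫ p, (W p.1 p.2 - W' p.1 p.2) ∂((c.classMeasure k.1).prod (c.classMeasure k.2))) *
        (Real.logb 2 (1 - c.param k.1 k.2) - Real.logb 2 (c.param k.1 k.2)) := by
  have hfst : Measurable (fun p : (ℝ × ι) × (ℝ × ι) => (p.1.1, p.2.1)) :=
    measurable_fst.prodMap measurable_fst
  have hclasses : Measurable (fun p : (ℝ × ι) × (ℝ × ι) => (p.1.2, p.2.2)) :=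
    measurable_snd.prodMap measurable_snd
  rw [length, length, ← integral_sub (c.integrable_bits hW _) (c.integrable_bits hW' _),
    integral_eq_sum_setIntegral_fiber (f := fun p => c.bits W p - c.bits W' p) hclasses
      ((c.integrable_bits hW _).sub (c.integrable_bits hW' _))]
  refine Finset.sum_congr rfl fun ⟨i, j⟩ _ => ?_
  have hfiber : (fun p : (ℝ × ι) × (ℝ × ι) => (p.1.2, p.2.2)) ⁻¹' {(i, j)} =
      (Prod.snd ⁻¹' {i}) ×ˢ (Prod.snd ⁻¹' {j}) := by
    ext p
    simp only [mem_preimage, mem_singleton_iff, mem_prod, Prod.mk.injEq]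
  have hprod : (c.classMeasure i).prod (c.classMeasure j) =
      ((c.joint.prod c.joint).restrict ((Prod.snd ⁻¹' {i}) ×ˢ (Prod.snd ⁻¹' {j}))).map
        (fun p => (p.1.1, p.2.1)) := by
    rw [← Measure.prod_restrict]
    exact Measure.map_prod_map _ _ measurable_fst measurable_fst
  rw [hfiber, hprod, integral_map (f := fun p => W p.1 p.2 - W' p.1 p.2) hfst.aemeasurable
    (hW.measurable.sub hW'.measurable).aestronglyMeasurable, ← integral_mul_const]
  refine setIntegral_congr_fun ((measurable_snd (measurableSet_singleton i)).prod
    (measurable_snd (measurableSet_singleton j))) fun p hp => ?_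
  obtain ⟨rfl, rfl⟩ : p.1.2 = i ∧ p.2.2 = j := hp
  exact c.bits_sub_bits p

lemma length_sub_length_le_cutNorm [Finite ι] (hW : IsGraphon W) (hW' : IsGraphon W') :
    c.length W - c.length W' ≤
      Nat.card (ι × ι) * sumAbsLogOdds Q * cutNorm (fun x y => W x y - W' x y) := by
  have := Fintype.ofFinite ι
  have hclass (k : ι × ι) :
      (∫ p, (W p.1 p.2 - W' p.1 p.2) ∂((c.classMeasure k.1).prod (c.classMeasure k.2))) *
        (Real.logb 2 (1 - c.param k.1 k.2) - Real.logb 2 (c.param k.1 k.2)) ≤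
      cutNorm (fun x y => W x y - W' x y) * sumAbsLogOdds Q := by
    refine (le_abs_self _).trans ((abs_mul _ _).trans_le ?_)
    refine mul_le_mul (abs_integral_prod_le_cutNorm
      (U := fun x y => W x y - W' x y) (hW.measurable.sub hW'.measurable)
      ((hW.integrable _).sub (hW'.integrable _)) (c.classMeasure_le _) (c.classMeasure_le _)) ?_
      (abs_nonneg _) (cutNorm_nonneg _)
    exact Finset.single_le_sum
      (f := fun q : Ioo (0 : ℝ) 1 => |Real.logb 2 (1 - q) - Real.logb 2 q|)
      (fun _ _ => abs_nonneg _) (c.param k.1 k.2).2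
  rw [c.length_sub_length hW hW']
  refine (Finset.sum_le_card_nsmul _ _ _ fun k _ => hclass k).trans_eq ?_
  rw [nsmul_eq_mul, Finset.card_univ, Nat.card_eq_fintype_card]
  ring

end BlockCode

end BlockCodes

section MinCodeLength

variable {ι : Type*} [MeasurableSpace ι] {Q : Finset (Ioo (0 : ℝ) 1)} {W W' : ℝ → ℝ → ℝ}

variable (ι Q) in
/-- The least expected number of bits per pair of points in a code for the graphon `W` by a
stochastic block model with classes `ι` and edge probabilities in `Q`: a cut-distance-continuous
upper approximation of `graphonEnt W`. It is `0` if there are no codes. -/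
def minCodeLength (W : ℝ → ℝ → ℝ) : ℝ := ⨅ c : BlockCode ι Q, c.length W

lemma minCodeLength_le_length (hW : IsGraphon W) (c : BlockCode ι Q) :
    minCodeLength ι Q W ≤ c.length W :=
  ciInf_le ⟨0, forall_mem_range.2 fun c => c.length_nonneg hW⟩ c

lemma minCodeLength_nonneg (hW : IsGraphon W) : 0 ≤ minCodeLength ι Q W :=
  Real.iInf_nonneg fun c => c.length_nonneg hW

lemma minCodeLength_le_one [Nonempty ι] (hQ : ⟨1 / 2, by norm_num⟩ ∈ Q) (hW : IsGraphon W) :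
    minCodeLength ι Q W ≤ 1 := by
  let c : BlockCode ι Q := .ofPartition
    (measurable_const (a := Classical.arbitrary ι)) fun _ _ => ⟨_, hQ⟩
  have hbits : c.bits W = fun _ => 1 := funext fun _ => binCrossEnt_half _
  refine (minCodeLength_le_length hW c).trans_eq ?_
  rw [BlockCode.length, hbits, integral_const, probReal_univ, one_smul]

variable [Finite ι] [MeasurableSingletonClass ι]

lemma graphonEnt_le_minCodeLength [Nonempty ι] [Nonempty Q] (hW : IsGraphon W) :
    graphonEnt W ≤ minCodeLength ι Q W :=
  le_ciInf fun c => c.graphonEnt_le_length hW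

lemma minCodeLength_comp [Nonempty ι] (hW : IsGraphon W) {σ : ℝ → ℝ}
    (hσ : MeasurePreserving σ unitMeasure unitMeasure) :
    minCodeLength ι Q (fun x y => W (σ x) (σ y)) = minCodeLength ι Q W := by
  have : StandardBorelSpace ι := standardBorelSpace_of_discreteMeasurableSpace
  have hWσ := hW.comp hσ.measurable
  rcases isEmpty_or_nonempty (BlockCode ι Q) with hempty | hnonempty
  · simp only [minCodeLength, Real.iInf_of_isEmpty]
  refine le_antisymm (le_ciInf fun c => ?_) (le_ciInf fun c => ?_)
  · have hσc : MeasurePreserving σ unitMeasure c.joint.fst := by rwa [c.fst_joint]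
    obtain ⟨ρ, hfst, hmap⟩ := exists_map_prodMap_id_eq hσc
    let c' : BlockCode ι Q := ⟨ρ, hfst, c.param⟩
    exact (minCodeLength_le_length hWσ c').trans_eq
      (BlockCode.length_comp hσ.measurable hmap rfl (c.measurable_bits hW))
  · let c' : BlockCode ι Q :=
      { joint := c.joint.map (Prod.map σ id)
        fst_joint := by
          rw [Measure.fst, Measure.map_map measurable_fst (hσ.measurable.prodMap measurable_id)]
          exact (hσ.comp c.measurePreserving_fst).map_eq
        param := c.param }
    exact (minCodeLength_le_length hW c').trans_eq
      (BlockCode.length_comp (c' := c') hσ.measurable rfl rfl (c'.measurable_bits hW)).symm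

lemma minCodeLength_le_add_cutNorm [Nonempty ι] [Nonempty Q] (hW : IsGraphon W)
    (hW' : IsGraphon W') :
    minCodeLength ι Q W ≤ minCodeLength ι Q W' +
      Nat.card (ι × ι) * sumAbsLogOdds Q * cutNorm (fun x y => W x y - W' x y) := by
  rw [← sub_le_iff_le_add]
  refine le_ciInf fun c => ?_
  linarith [minCodeLength_le_length hW c, c.length_sub_length_le_cutNorm hW hW']

lemma abs_minCodeLength_sub_le [Nonempty ι] [Nonempty Q] (hW : IsGraphon W)
    (hW' : IsGraphon W') :
    |minCodeLength ι Q W - minCodeLength ι Q W'| ≤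
      Nat.card (ι × ι) * sumAbsLogOdds Q * cutNorm (fun x y => W x y - W' x y) := by
  have h := minCodeLength_le_add_cutNorm (ι := ι) (Q := Q) hW hW'
  have h' := minCodeLength_le_add_cutNorm (ι := ι) (Q := Q) hW' hW
  rw [← cutNorm_neg] at h'
  simp only [neg_sub] at h'
  exact abs_sub_le_iff.2 ⟨by linarith, by linarith⟩

variable (ι Q) in
lemma continuous_minCodeLength [Nonempty ι] [Nonempty Q] :
    Continuous fun W : Graphon => minCodeLength ι Q W.1 := by
  let K : ℝ := Nat.card (ι × ι) * sumAbsLogOdds Q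
  have hK : 0 ≤ K := mul_nonneg (Nat.cast_nonneg _) (Finset.sum_nonneg fun _ _ => abs_nonneg _)
  refine continuous_iff_continuousAt.2 fun W₀ => Metric.tendsto_nhds.2 fun ε hε => ?_
  have hδ : 0 < ε / (K + 1) := div_pos hε (by positivity)
  have hball : {W : Graphon | deltaCut W.1 W₀.1 < ε / (K + 1)} ∈ nhds W₀ :=
    IsOpen.mem_nhds (.basic _ ⟨W₀, _, hδ, rfl⟩) ((deltaCut_self_le_zero W₀.1).trans_lt hδ)
  filter_upwards [hball] with W hW
  obtain ⟨σ, σ₀, hσ, hσ₀, hcut⟩ := exists_cutNorm_lt_of_deltaCut_lt hW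
  calc dist (minCodeLength ι Q W.1) (minCodeLength ι Q W₀.1)
      = |minCodeLength ι Q (fun x y => W.1 (σ x) (σ y)) -
          minCodeLength ι Q (fun x y => W₀.1 (σ₀ x) (σ₀ y))| := by
        rw [minCodeLength_comp W.2 hσ.1, minCodeLength_comp W₀.2 hσ₀.1, Real.dist_eq]
    _ ≤ K * cutNorm (fun x y => W.1 (σ x) (σ y) - W₀.1 (σ₀ x) (σ₀ y)) :=
        abs_minCodeLength_sub_le (W.2.comp hσ.1.measurable) (W₀.2.comp hσ₀.1.measurable)
    _ ≤ K * (ε / (K + 1)) := mul_le_mul_of_nonneg_left hcut.le hK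
    _ < ε := by
        rw [mul_div_assoc', div_lt_iff₀ (by positivity)]
        linarith

end MinCodeLength

section RandomAssignment

lemma measurePreserving_eval_prodMk {V : Type*} [Fintype V] {Ω : V → Type*}
    [∀ v, MeasurableSpace (Ω v)] (π : ∀ v, Measure (Ω v)) [∀ v, IsProbabilityMeasure (π v)]
    {v w : V} (hvw : v ≠ w) :
    MeasurePreserving (fun ω => (ω v, ω w)) (Measure.pi π) ((π v).prod (π w)) := by
  have hindep := (ProbabilityTheory.iIndepFun_pi (μ := π) (X := fun _ => id)
    fun _ => aemeasurable_id).indepFun hvw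
  refine ⟨(measurable_pi_apply v).prodMk (measurable_pi_apply w), ?_⟩
  rw [← (measurePreserving_eval π v).map_eq, ← (measurePreserving_eval π w).map_eq]
  exact (ProbabilityTheory.indepFun_iff_map_prod_eq_prod_map_map
    (measurable_pi_apply v).aemeasurable (measurable_pi_apply w).aemeasurable).1 hindep

lemma exists_sum_offDiag_le_sum_integral_prod {V Ω : Type*} [Fintype V] [MeasurableSpace Ω]
    (π : V → Measure Ω) [∀ v, IsProbabilityMeasure (π v)]
    {f : V → V → Ω × Ω → ℝ} (hf : ∀ v w, Integrable (f v w) ((π v).prod (π w))) :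
    ∃ ω : V → Ω, ∑ e ∈ Finset.univ.offDiag, f e.1 e.2 (ω e.1, ω e.2) ≤
      ∑ e ∈ Finset.univ.offDiag, ∫ p, f e.1 e.2 p ∂((π e.1).prod (π e.2)) := by
  have hint (e : V × V) (he : e ∈ Finset.univ.offDiag) :
      Integrable (fun ω => f e.1 e.2 (ω e.1, ω e.2)) (Measure.pi π) :=
    (measurePreserving_eval_prodMk π (Finset.mem_offDiag.1 he).2.2).integrable_comp_of_integrable
      (hf e.1 e.2)
  obtain ⟨ω, hω⟩ := exists_le_integral (integrable_finsetSum _ hint)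
  refine ⟨ω, hω.trans_eq ?_⟩
  rw [integral_finsetSum _ hint]
  refine Finset.sum_congr rfl fun e he => ?_
  have hpair := measurePreserving_eval_prodMk π (Finset.mem_offDiag.1 he).2.2
  rw [← hpair.map_eq, integral_map hpair.measurable.aemeasurable]
  rw [hpair.map_eq]
  exact (hf e.1 e.2).aestronglyMeasurable

lemma sum_setIntegral_le_integral {α β : Type*} [MeasurableSpace α] {μ : Measure α} {s : Finset β}
    {t : β → Set α} (ht : ∀ b ∈ s, MeasurableSet (t b)) (hdisj : (s : Set β).PairwiseDisjoint t)
    {f : α → ℝ} (hf : Integrable f μ) (hf₀ : 0 ≤ f) :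
    ∑ b ∈ s, ∫ x in t b, f x ∂μ ≤ ∫ x, f x ∂μ := by
  rw [← integral_biUnion_finset s ht hdisj fun _ _ => hf.integrableOn]
  exact setIntegral_le_integral hf (ae_of_all _ hf₀)

end RandomAssignment

section GraphGraphons

variable {n : ℕ}

/-- The interval of the points that `graphonOfGraph` identifies with the vertex `v`. -/
def vertexInterval (v : Fin n) : Set ℝ := {x | ⌈(n : ℝ) * x⌉ = ((v : ℕ) : ℤ) + 1}

lemma vertexInterval_eq_Ioc (v : Fin n) :
    vertexInterval v = Ioc (((v : ℕ) : ℝ) / n) ((((v : ℕ) : ℝ) + 1) / n) := by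
  have hn : (0 : ℝ) < n := by exact_mod_cast v.pos
  ext x
  rw [vertexInterval, mem_ofPred_eq, Int.ceil_eq_iff, mem_Ioc, div_lt_iff₀' hn, le_div_iff₀' hn]
  push_cast
  rw [add_sub_cancel_right]

lemma measurableSet_vertexInterval (v : Fin n) : MeasurableSet (vertexInterval v) := by
  rw [vertexInterval_eq_Ioc]
  exact measurableSet_Ioc

lemma pairwiseDisjoint_vertexInterval :
    Pairwise (Function.onFun Disjoint (vertexInterval (n := n))) := by
  refine fun v w hvw => disjoint_left.2 fun x hv hw => hvw (Fin.ext ?_)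
  rw [vertexInterval, mem_ofPred_eq] at hv hw
  omega

lemma unitMeasure_vertexInterval (v : Fin n) :
    unitMeasure (vertexInterval v) = (n : ENNReal)⁻¹ := by
  have hn : (0 : ℝ) < n := by exact_mod_cast v.pos
  have hv : ((v : ℕ) : ℝ) + 1 ≤ n := by exact_mod_cast v.2
  have hsub : Ioc (((v : ℕ) : ℝ) / n) ((((v : ℕ) : ℝ) + 1) / n) ⊆ Icc 0 1 := fun x hx =>
    ⟨le_trans (by positivity) hx.1.le, hx.2.trans ((div_le_one hn).2 hv)⟩
  rw [vertexInterval_eq_Ioc, Measure.restrict_apply measurableSet_Ioc,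
    inter_eq_self_of_subset_left hsub, Real.volume_Ioc, ← sub_div, add_sub_cancel_left, one_div,
    ENNReal.ofReal_inv_of_pos hn, ENNReal.ofReal_natCast]

open Classical in
lemma graphonOfGraph_eq_adjMatrix (G : SimpleGraph (Fin n)) {v w : Fin n} {x y : ℝ}
    (hx : x ∈ vertexInterval v) (hy : y ∈ vertexInterval w) :
    graphonOfGraph G x y = G.adjMatrix ℝ v w := by
  have hv {i : Fin n} (hi : ⌈(n : ℝ) * x⌉ = ((i : ℕ) : ℤ) + 1) : i = v :=
    pairwiseDisjoint_vertexInterval.eq (not_disjoint_iff.2 ⟨x, hi, hx⟩)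
  have hw {j : Fin n} (hj : ⌈(n : ℝ) * y⌉ = ((j : ℕ) : ℤ) + 1) : j = w :=
    pairwiseDisjoint_vertexInterval.eq (not_disjoint_iff.2 ⟨y, hj, hy⟩)
  rw [graphonOfGraph, SimpleGraph.adjMatrix_apply]
  refine if_congr ⟨?_, fun h => ⟨v, w, h, hx, hy⟩⟩ rfl rfl
  rintro ⟨i, j, hij, hi, hj⟩
  rwa [← hv hi, ← hw hj]

namespace BlockCode

variable {ι : Type*} [MeasurableSpace ι] {Q : Finset (Ioo (0 : ℝ) 1)} (c : BlockCode ι Q)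

/-- The law of a uniform point of the interval of the vertex `v`, jointly with its class. -/
def vertexLaw (v : Fin n) : Measure (ℝ × ι) :=
  ProbabilityTheory.cond c.joint (Prod.fst ⁻¹' vertexInterval v)

lemma joint_preimage_vertexInterval (v : Fin n) :
    c.joint (Prod.fst ⁻¹' vertexInterval v) = (n : ENNReal)⁻¹ := by
  rw [c.measurePreserving_fst.measure_preimage (measurableSet_vertexInterval v).nullMeasurableSet,
    unitMeasure_vertexInterval]

instance (v : Fin n) : IsProbabilityMeasure (c.vertexLaw v) :=
  ProbabilityTheory.cond_isProbabilityMeasure (by simp [c.joint_preimage_vertexInterval])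

lemma integral_vertexLaw_prod (v w : Fin n) (f : (ℝ × ι) × (ℝ × ι) → ℝ) :
    ∫ p, f p ∂((c.vertexLaw v).prod (c.vertexLaw w)) = (n : ℝ) ^ 2 *
      ∫ p in (Prod.fst ⁻¹' vertexInterval v) ×ˢ (Prod.fst ⁻¹' vertexInterval w), f p
        ∂(c.joint.prod c.joint) := by
  simp only [vertexLaw, ProbabilityTheory.cond, c.joint_preimage_vertexInterval, inv_inv,
    Measure.prod_smul_left, Measure.prod_smul_right, Measure.prod_restrict, integral_smul_measure,
    ENNReal.toReal_natCast, smul_eq_mul]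
  ring

open Classical in
lemma integral_binCrossEnt_vertexLaw_prod (G : SimpleGraph (Fin n)) (v w : Fin n) :
    ∫ p, binCrossEnt (c.param p.1.2 p.2.2) (G.adjMatrix ℝ v w)
        ∂((c.vertexLaw v).prod (c.vertexLaw w)) =
      ∫ p, c.bits (graphonOfGraph G) p ∂((c.vertexLaw v).prod (c.vertexLaw w)) := by
  rw [integral_vertexLaw_prod, integral_vertexLaw_prod]
  congr 1
  refine setIntegral_congr_fun ((measurable_fst (measurableSet_vertexInterval _)).prod
      (measurable_fst (measurableSet_vertexInterval _))) fun p hp => ?_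
  rw [bits, graphonOfGraph_eq_adjMatrix G hp.1 hp.2]

variable [Finite ι] [MeasurableSingletonClass ι]

lemma sum_integral_vertexLaw_prod_le (G : SimpleGraph (Fin n)) :
    ∑ e ∈ (Finset.univ : Finset (Fin n)).offDiag,
      ∫ p, c.bits (graphonOfGraph G) p ∂((c.vertexLaw e.1).prod (c.vertexLaw e.2)) ≤
    (n : ℝ) ^ 2 * c.length (graphonOfGraph G) := by
  have hW := isGraphon_graphonOfGraph G
  simp only [integral_vertexLaw_prod, ← Finset.mul_sum]
  refine mul_le_mul_of_nonneg_left (sum_setIntegral_le_integral (fun e _ => ?_) ?_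
    (c.integrable_bits hW _) (c.bits_nonneg hW)) (sq_nonneg _)
  · exact (measurable_fst (measurableSet_vertexInterval _)).prod
      (measurable_fst (measurableSet_vertexInterval _))
  · intro e _ e' _ hne
    by_cases h : e.1 = e'.1
    · have h₂ : e.2 ≠ e'.2 := fun h₂ => hne (Prod.ext h h₂)
      exact ((pairwiseDisjoint_vertexInterval h₂).preimage _).set_prod_right _ _
    · exact ((pairwiseDisjoint_vertexInterval h).preimage _).set_prod_left _ _

-- Draw the classes of the vertices independently from the code; since `c.length` counts each pair
-- of vertices in both orders, one of the two orders costs at most half.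
lemma exists_graphCodeLength_le (G : SimpleGraph (Fin n)) :
    ∃ (κ : Fin n → ι) (u : ι → ι → Q), graphCodeLength (fun v w => (u (κ v) (κ w) : ℝ)) G ≤
      (n : ℝ) ^ 2 / 2 * c.length (graphonOfGraph G) := by
  classical
  have hint (v w : Fin n) :
      Integrable (fun p => binCrossEnt (c.param p.1.2 p.2.2) (G.adjMatrix ℝ v w))
        ((c.vertexLaw v).prod (c.vertexLaw w)) := by
    have hclasses : Measurable fun p : (ℝ × ι) × (ℝ × ι) => (p.1.2, p.2.2) :=
      measurable_snd.prodMap measurable_snd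
    have h : Integrable (fun k : ι × ι => binCrossEnt (c.param k.1 k.2) (G.adjMatrix ℝ v w))
      (((c.vertexLaw v).prod (c.vertexLaw w)).map fun p => (p.1.2, p.2.2)) := .of_finite
    exact h.comp_measurable hclasses
  obtain ⟨ω, hω⟩ := exists_sum_offDiag_le_sum_integral_prod c.vertexLaw hint
  simp only [integral_binCrossEnt_vertexLaw_prod] at hω
  rw [← graphCodeLength_add_transpose (fun v w => (c.param (ω v).2 (ω w).2 : ℝ))] at hω
  have h := hω.trans (c.sum_integral_vertexLaw_prod_le G)
  rcases le_total (graphCodeLength (fun v w => (c.param (ω v).2 (ω w).2 : ℝ)) G)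
    (graphCodeLength (fun v w => (c.param (ω w).2 (ω v).2 : ℝ)) G) with hle | hle
  · exact ⟨fun v => (ω v).2, c.param, by linarith⟩
  · exact ⟨fun v => (ω v).2, fun i j => c.param j i, by linarith⟩

end BlockCode

end GraphGraphons

section GraphEntropy

instance : BorelSpace Graphon := ⟨rfl⟩

variable {n : ℕ} (ι : Type*) [MeasurableSpace ι] [Finite ι] [MeasurableSingletonClass ι]
  [Nonempty ι] (Q : Finset (Ioo (0 : ℝ) 1)) [Nonempty Q]

lemma exists_graphCodeLength_le_minCodeLength (G : SimpleGraph (Fin n)) :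
    ∃ k : (Fin n → ι) × (ι → ι → Q),
      graphCodeLength (fun v w => (k.2 (k.1 v) (k.1 w) : ℝ)) G ≤
        (n : ℝ) ^ 2 / 2 * minCodeLength ι Q (graphonOfGraph G) := by
  obtain ⟨k, hk⟩ := Finite.exists_min fun k : (Fin n → ι) × (ι → ι → Q) =>
    graphCodeLength (fun v w => (k.2 (k.1 v) (k.1 w) : ℝ)) G
  refine ⟨k, ?_⟩
  rw [minCodeLength, Real.mul_iInf_of_nonneg (by positivity)]
  refine le_ciInf fun c => ?_
  obtain ⟨κ, u, h⟩ := c.exists_graphCodeLength_le G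
  exact (hk (κ, u)).trans h

lemma graphEntropy_le (ν : Measure (SimpleGraph (Fin n))) [IsProbabilityMeasure ν] :
    graphEntropy ν ≤ n * Real.logb 2 (Nat.card ι) +
      Real.logb 2 (Nat.card (ι → ι → Q)) +
      (n : ℝ) ^ 2 / 2 * ∫ W, minCodeLength ι Q W.1 ∂(ν.map graphonMap) := by
  classical
  have := Fintype.ofFinite ι
  choose sel hsel using exists_graphCodeLength_le_minCodeLength (n := n) ι Q
  have hν : ∑ G, (ν {G}).toReal = 1 := by
    rw [← ENNReal.toReal_sum fun G _ => measure_ne_top _ _, sum_measure_singleton,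
      Finset.coe_univ, measure_univ, ENNReal.toReal_one]
  have hcard : Real.logb 2 (Fintype.card ((Fin n → ι) × (ι → ι → Q))) =
      n * Real.logb 2 (Nat.card ι) + Real.logb 2 (Nat.card (ι → ι → Q)) := by
    rw [Fintype.card_prod, Nat.cast_mul, Real.logb_mul (Nat.cast_ne_zero.2 Fintype.card_ne_zero)
      (Nat.cast_ne_zero.2 Fintype.card_ne_zero), Fintype.card_fun,
      Fintype.card_fin, Nat.cast_pow, Real.logb_pow, Nat.card_eq_fintype_card,
      Nat.card_eq_fintype_card]
  have hint : ∫ W, minCodeLength ι Q W.1 ∂(ν.map graphonMap) =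
      ∑ G, (ν {G}).toReal * minCodeLength ι Q (graphonOfGraph G) := by
    rw [integral_map measurable_from_top.aemeasurable
      (continuous_minCodeLength ι Q).measurable.aestronglyMeasurable, integral_fintype .of_finite]
    rfl
  rw [hint, ← hcard, Finset.mul_sum]
  have hcode := entropy_le_logb_card_add_sum_mul (p := fun G => (ν {G}).toReal)
    (fun _ => ENNReal.toReal_nonneg) hν
    (fun k : (Fin n → ι) × (ι → ι → Q) =>
      sum_two_rpow_neg_graphCodeLength_le_one fun v w => (k.2 (k.1 v) (k.1 w)).1.2) sel
  refine hcode.trans (add_le_add_right (Finset.sum_le_sum fun G _ => ?_) _)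
  rw [mul_left_comm]
  exact mul_le_mul_of_nonneg_left (hsel G) ENNReal.toReal_nonneg

end GraphEntropy

section Grid

/-- The grid of edge probabilities `(k + 1) / (2 m + 2)`, `0 ≤ k ≤ 2 m`: it has mesh
`1 / (2 m + 2)` and contains the midpoint `1 / 2`, which keeps the minimal code length below one. -/
def gridParams (m : ℕ) : Finset (Ioo (0 : ℝ) 1) :=
  Finset.univ.image fun k : Fin (2 * m + 1) => ⟨((k : ℝ) + 1) / (2 * m + 2), by
    have hk : (k : ℝ) + 1 ≤ 2 * m + 1 := by exact_mod_cast k.2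
    exact ⟨by positivity, (div_lt_one (by positivity)).2 (by linarith)⟩⟩

lemma half_mem_gridParams (m : ℕ) : ⟨1 / 2, by norm_num⟩ ∈ gridParams m := by
  refine Finset.mem_image.2 ⟨⟨m, by omega⟩, Finset.mem_univ _, Subtype.ext ?_⟩
  change ((m : ℝ) + 1) / (2 * m + 2) = 1 / 2
  field_simp

instance (m : ℕ) : Nonempty (gridParams m) := ⟨_, half_mem_gridParams m⟩

lemma exists_gridParams_abs_sub_le {m : ℕ} {η s : ℝ} (hm : 1 / (2 * (m : ℝ) + 2) ≤ η)
    (hs : s ∈ Icc η (1 - η)) : ∃ q : gridParams m, |(q : ℝ) - s| ≤ 1 / (2 * (m : ℝ) + 2) := by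
  have hN : (0 : ℝ) < 2 * m + 2 := by positivity
  have hsm : 1 ≤ s * (2 * m + 2) := (div_le_iff₀ hN).1 (hm.trans hs.1)
  have hle := Nat.floor_le (zero_le_one.trans hsm)
  have hlt := Nat.lt_floor_add_one (s * (2 * (m : ℝ) + 2))
  have hpos : 1 ≤ ⌊s * (2 * (m : ℝ) + 2)⌋₊ := Nat.le_floor (by exact_mod_cast hsm)
  have hfloor : ⌊s * (2 * (m : ℝ) + 2)⌋₊ < 2 * m + 2 := by
    have hsm' : s * (2 * m + 2) < 2 * m + 2 := by nlinarith [hs.2, one_div_pos.2 hN]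
    exact_mod_cast hle.trans_lt hsm'
  refine ⟨⟨_, Finset.mem_image_of_mem _ (Finset.mem_univ
    ⟨⌊s * (2 * (m : ℝ) + 2)⌋₊ - 1, by omega⟩)⟩, ?_⟩
  change |(((⌊s * (2 * (m : ℝ) + 2)⌋₊ - 1 : ℕ) : ℝ) + 1) / (2 * m + 2) - s| ≤ _
  rw [Nat.cast_sub hpos, Nat.cast_one, sub_add_cancel, div_sub' hN.ne', abs_div, abs_of_pos hN]
  gcongr
  rw [mul_comm _ s, abs_le]
  constructor <;> linarith

/-- The index of the interval containing `x ∈ [0,1]` when `[0,1]` is cut into `m + 1` consecutive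
intervals of equal length; points outside `[0,1]` go to the first or the last interval. -/
def cell (m : ℕ) (x : ℝ) : Fin (m + 1) :=
  ⟨min ⌊((m : ℝ) + 1) * x⌋₊ m, (min_le_right _ _).trans_lt m.lt_succ_self⟩

lemma measurable_cell (m : ℕ) : Measurable (cell m) :=
  (measurable_from_nat (f := fun k => (⟨min k m, by omega⟩ : Fin (m + 1)))).comp
    (Nat.measurable_floor.comp (measurable_id.const_mul _))

lemma dist_cell_div_le (m : ℕ) {x : ℝ} (hx : x ∈ Icc (0 : ℝ) 1) :
    dist x ((cell m x : ℝ) / (m + 1)) ≤ 1 / (m + 1) := by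
  have hm : (0 : ℝ) < m + 1 := by positivity
  have hle := Nat.floor_le (mul_nonneg hm.le hx.1)
  have hlt := Nat.lt_floor_add_one (((m : ℝ) + 1) * x)
  have hmx : ((m : ℝ) + 1) * x ≤ m + 1 := mul_le_of_le_one_right hm.le hx.2
  rw [Real.dist_eq, sub_div' hm.ne', abs_div, abs_of_pos hm]
  gcongr
  rw [mul_comm, abs_le]
  change _ ≤ _ - ((min ⌊((m : ℝ) + 1) * x⌋₊ m : ℕ) : ℝ) ∧ _ - ((min _ _ : ℕ) : ℝ) ≤ _
  rw [Nat.cast_min]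
  constructor <;> rcases min_cases (⌊((m : ℝ) + 1) * x⌋₊ : ℝ) m with h | h <;> linarith

lemma ae_dist_cell_div_le (m : ℕ) : ∀ᵐ p ∂squareMeasure,
    dist p ((cell m p.1 : ℝ) / (m + 1), (cell m p.2 : ℝ) / (m + 1)) ≤ 1 / (m + 1) := by
  have hmem : ∀ᵐ x ∂unitMeasure, x ∈ Icc (0 : ℝ) 1 := ae_restrict_mem measurableSet_Icc
  filter_upwards [Measure.quasiMeasurePreserving_fst.ae hmem,
    Measure.quasiMeasurePreserving_snd.ae hmem] with p h₁ h₂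
  exact max_le (dist_cell_div_le m h₁) (dist_cell_div_le m h₂)

lemma eventually_exists_integral_abs_sub_cell_le {f : ℝ × ℝ → ℝ}
    (hf : Integrable f squareMeasure) {δ : ℝ} (hδ : 0 < δ) :
    ∀ᶠ m in atTop, ∃ t : Fin (m + 1) → Fin (m + 1) → ℝ,
      ∫ p, |f p - t (cell m p.1) (cell m p.2)| ∂squareMeasure ≤ δ := by
  obtain ⟨g, hg, hfg, hgc, hgi⟩ := hf.exists_hasCompactSupport_integral_sub_le (half_pos hδ)
  obtain ⟨r, hr, hgr⟩ := Metric.uniformContinuous_iff.1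
    (hg.uniformContinuous_of_continuous hgc) _ (half_pos hδ)
  filter_upwards [tendsto_one_div_add_atTop_nhds_zero_nat.eventually (gt_mem_nhds hr)] with m hm
  refine ⟨fun i j => g ((i : ℝ) / (m + 1), (j : ℝ) / (m + 1)), ?_⟩
  have hfg' : Integrable (fun p => |f p - g p|) squareMeasure := (hf.sub hgi).abs
  calc _ ≤ ∫ p, (|f p - g p| + δ / 2) ∂squareMeasure := by
        refine integral_mono_of_nonneg (ae_of_all _ fun _ => abs_nonneg _)
          (hfg'.add (integrable_const _)) ?_
        filter_upwards [ae_dist_cell_div_le m] with p hp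
        exact (abs_sub_le _ (g p) _).trans
          (add_le_add_right (hgr (hp.trans_lt hm)).le _)
    _ ≤ δ / 2 + δ / 2 := by
        rw [integral_add hfg' (integrable_const _), integral_const, probReal_univ, one_smul]
        exact add_le_add_left hfg _
    _ = δ := add_halves δ

end Grid

section CodeLengthLimit

lemma BlockCode.length_ofPartition {ι : Type*} [MeasurableSpace ι] [Finite ι]
    [MeasurableSingletonClass ι] {Q : Finset (Ioo (0 : ℝ) 1)} {κ : ℝ → ι} (hκ : Measurable κ)
    (u : ι → ι → Q) {W : ℝ → ℝ → ℝ} (hW : IsGraphon W) :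
    (ofPartition hκ u).length W =
      ∫ p, binCrossEnt (u (κ p.1) (κ p.2)) (W p.1 p.2) ∂squareMeasure := by
  have hmap : Measurable fun x => (x, κ x) := measurable_id.prodMk hκ
  have hjoint : (ofPartition hκ u).joint = unitMeasure.map fun x => (x, κ x) := rfl
  rw [length, hjoint, Measure.map_prod_map _ _ hmap hmap,
    integral_map (hmap.prodMap hmap).aemeasurable (measurable_bits _ hW).aestronglyMeasurable]
  rfl

lemma binCrossEnt_le_of_abs_sub_projIcc_le {η t u v : ℝ} (hη : 0 < η) (hη' : η ≤ 1 / 4)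
    (hv : v ∈ Icc (0 : ℝ) 1)
    (hu : |u - projIcc η (1 - η) (by linarith) t| ≤ η / 2) :
    binCrossEnt u v ≤ binEnt v + (16 * η + 8 / η * |v - t|) := by
  have hle : η ≤ 1 - η := by linarith
  have ht := (projIcc η (1 - η) hle t).2
  have hv' := (projIcc η (1 - η) hle v).2
  have hvη : |v - projIcc η (1 - η) hle v| ≤ η := by
    rw [coe_projIcc, abs_le]
    constructor <;> rcases max_cases η (min (1 - η) v) with h | h <;>
      rcases min_cases (1 - η) v with h' | h' <;> linarith [hv.1, hv.2]
  have hvt := abs_projIcc_sub_projIcc hle (c := v) (d := t)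
  set c : ℝ := (projIcc η (1 - η) hle v : ℝ)
  set d : ℝ := (projIcc η (1 - η) hle t : ℝ)
  obtain ⟨hu₁, hu₂⟩ := abs_le.1 hu
  obtain ⟨hv₁, hv₂⟩ := abs_le.1 hvη
  have hclamped : (c - d) ^ 2 ≤ |v - t| := by
    have hone : |c - d| ≤ 1 := abs_le.2 ⟨by linarith [ht.2, hv'.1], by linarith [ht.1, hv'.2]⟩
    rw [← sq_abs]
    nlinarith [abs_nonneg (c - d)]
  have herr : ((v - c) + (d - u)) ^ 2 ≤ (3 / 2 * η) ^ 2 := sq_le_sq' (by linarith) (by linarith)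
  have hsq : (v - u) ^ 2 ≤ 9 / 2 * η ^ 2 + 2 * |v - t| := by
    nlinarith [sq_nonneg ((v - c) + (d - u) - (c - d))]
  have hvar : 7 / 16 * η ≤ u * (1 - u) := by nlinarith [ht.1, ht.2]
  have hdenom : 3 / 10 * η ≤ u * (1 - u) * Real.log 2 := by
    nlinarith [Real.log_two_gt_d9]
  refine (binCrossEnt_le_binEnt_add ⟨by linarith [ht.1], by linarith [ht.2]⟩ hv).trans
    (add_le_add_right ?_ _)
  calc (v - u) ^ 2 / (u * (1 - u)) / Real.log 2
      ≤ (9 / 2 * η ^ 2 + 2 * |v - t|) / (3 / 10 * η) := by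
        rw [div_div]
        gcongr
    _ = 15 * η + 20 / 3 / η * |v - t| := by field_simp; ring
    _ ≤ 16 * η + 8 / η * |v - t| := by gcongr <;> norm_num

lemma minCodeLength_gridParams_le {m : ℕ} {η : ℝ} (hη : 0 < η) (hη' : η ≤ 1 / 4)
    (hm : 1 / (2 * (m : ℝ) + 2) ≤ η / 2) {W : ℝ → ℝ → ℝ} (hW : IsGraphon W)
    (t : Fin (m + 1) → Fin (m + 1) → ℝ) :
    minCodeLength (Fin (m + 1)) (gridParams m) W ≤ graphonEnt W + (16 * η +
      8 / η * ∫ p, |W p.1 p.2 - t (cell m p.1) (cell m p.2)| ∂squareMeasure) := by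
  have hgrid (i j : Fin (m + 1)) : ∃ q : gridParams m,
      |(q : ℝ) - projIcc η (1 - η) (by linarith) (t i j)| ≤ η / 2 := by
    obtain ⟨q, hq⟩ := exists_gridParams_abs_sub_le (hm.trans (half_le_self hη.le))
      (projIcc η (1 - η) (by linarith) (t i j)).2
    exact ⟨q, hq.trans hm⟩
  choose u hu using hgrid
  have hstep : Integrable (fun p => t (cell m p.1) (cell m p.2)) squareMeasure :=
    (Integrable.of_finite (f := fun k : Fin (m + 1) × Fin (m + 1) => t k.1 k.2)).comp_measurable
      ((measurable_cell m).prodMap (measurable_cell m))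
  have hdiff : Integrable (fun p => |W p.1 p.2 - t (cell m p.1) (cell m p.2)|) squareMeasure :=
    ((hW.integrable _).sub hstep).abs
  have hbound : Integrable (fun p => 16 * η + 8 / η * |W p.1 p.2 - t (cell m p.1) (cell m p.2)|)
      squareMeasure := (integrable_const _).add (hdiff.const_mul _)
  calc minCodeLength (Fin (m + 1)) (gridParams m) W
      ≤ ∫ p, binCrossEnt (u (cell m p.1) (cell m p.2)) (W p.1 p.2) ∂squareMeasure :=
        (minCodeLength_le_length hW _).trans_eq
          (BlockCode.length_ofPartition (measurable_cell m) u hW)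
    _ ≤ ∫ p, (binEnt (W p.1 p.2) +
          (16 * η + 8 / η * |W p.1 p.2 - t (cell m p.1) (cell m p.2)|)) ∂squareMeasure := by
        refine integral_mono_of_nonneg (ae_of_all _ fun p => ?_)
          ((hW.integrable_binEnt _).add hbound) (ae_of_all _ fun p => ?_)
        · exact binCrossEnt_nonneg (Subtype.prop _) (hW.mem_Icc _ _)
        · exact binCrossEnt_le_of_abs_sub_projIcc_le hη hη' (hW.mem_Icc _ _) (hu _ _)
    _ = _ := by
        rw [integral_add (hW.integrable_binEnt _) hbound, integral_add (integrable_const _)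
          (hdiff.const_mul _), integral_const_mul (8 / η), integral_const, probReal_univ, one_smul,
          graphonEnt_eq_integral_squareMeasure hW]

lemma eventually_minCodeLength_le {W : ℝ → ℝ → ℝ} (hW : IsGraphon W) {ε : ℝ} (hε : 0 < ε) :
    ∀ᶠ m in atTop, minCodeLength (Fin (m + 1)) (gridParams m) W ≤ graphonEnt W + ε := by
  obtain ⟨η, hη, hη', hηε⟩ : ∃ η : ℝ, 0 < η ∧ η ≤ 1 / 4 ∧ η ≤ ε / 32 :=
    ⟨min (1 / 4) (ε / 32), by positivity, min_le_left _ _, min_le_right _ _⟩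
  have hδ : 0 < η * ε / 16 := by positivity
  filter_upwards [eventually_exists_integral_abs_sub_cell_le (hW.integrable _) hδ,
    tendsto_one_div_add_atTop_nhds_zero_nat.eventually (gt_mem_nhds hη)] with m ⟨t, ht⟩ hm
  have hmesh : 1 / (2 * (m : ℝ) + 2) ≤ η / 2 := by
    rw [show 1 / (2 * (m : ℝ) + 2) = 1 / (m + 1) / 2 by field_simp]
    exact div_le_div_of_nonneg_right hm.le two_pos.le
  refine (minCodeLength_gridParams_le hη hη' hmesh hW t).trans (add_le_add_right ?_ _)
  calc 16 * η + 8 / η * ∫ p, |W p.1 p.2 - t (cell m p.1) (cell m p.2)| ∂squareMeasure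
      ≤ 16 * (ε / 32) + 8 / η * (η * ε / 16) := by gcongr
    _ = ε := by field_simp; norm_num

lemma tendsto_minCodeLength {W : ℝ → ℝ → ℝ} (hW : IsGraphon W) :
    Tendsto (fun m : ℕ => minCodeLength (Fin (m + 1)) (gridParams m) W) atTop
      (nhds (graphonEnt W)) := by
  refine Metric.tendsto_nhds.2 fun ε hε => ?_
  filter_upwards [eventually_minCodeLength_le hW (half_pos hε)] with m hm
  rw [Real.dist_eq, abs_of_nonneg (sub_nonneg.2 (graphonEnt_le_minCodeLength hW))]
  linarith

end CodeLengthLimit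

section Support

lemma hereditarilyLindelofSpace_of_induced_le {X Y : Type*} [tX : TopologicalSpace X]
    [tY : TopologicalSpace Y] [SecondCountableTopology Y] (f : X → Y) (h : tY.induced f ≤ tX) :
    HereditarilyLindelofSpace X := by
  have hsc := TopologicalSpace.secondCountableTopology_induced X Y f
  refine .of_forall_isOpen fun s _ => ?_
  have hs := @HereditarilyLindelofSpace.isLindelof X (tY.induced f) _ s
  simpa only [image_id] using
    @IsLindelof.image X X (tY.induced f) tX s id hs (continuous_id_iff_le.2 h)

namespace Graphon

/-- The class of a graphon in `L¹([0,1]²)`, whose topology refines that of the cut distance. -/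
def toL1 (W : Graphon) : Lp ℝ 1 squareMeasure :=
  (W.2.integrable squareMeasure).toL1 fun p : ℝ × ℝ => W.1 p.1 p.2

lemma dist_toL1 (W W' : Graphon) :
    dist W.toL1 W'.toL1 = ∫ p, |W.1 p.1 p.2 - W'.1 p.1 p.2| ∂squareMeasure := by
  rw [L1.dist_eq_integral_dist]
  refine integral_congr_ae ?_
  filter_upwards [(W.2.integrable squareMeasure).coeFn_toL1,
    (W'.2.integrable squareMeasure).coeFn_toL1] with p h h'
  exact (congrArg₂ dist h h').trans (Real.dist_eq _ _)

lemma induced_toL1_le : TopologicalSpace.induced toL1 inferInstance ≤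
    (inferInstance : TopologicalSpace Graphon) := by
  refine le_generateFrom ?_
  rintro _ ⟨W₀, ε, -, rfl⟩
  refine @isOpen_iff_mem_nhds _ (_) _ |>.2 fun W hW => ?_
  rw [nhds_induced]
  refine ⟨_, Metric.ball_mem_nhds W.toL1 (sub_pos.2 hW), fun W' hW' => ?_⟩
  have hdist : dist W'.toL1 W.toL1 < ε - deltaCut W.1 W₀.1 := hW'
  rw [dist_toL1] at hdist
  exact (deltaCut_le_add_integral_abs W.2 W'.2 W₀.2).trans_lt (by linarith)

instance : HereditarilyLindelofSpace Graphon :=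
  have : Fact ((1 : ENNReal) ≠ ⊤) := ⟨ENNReal.one_ne_top⟩
  hereditarilyLindelofSpace_of_induced_le toL1 induced_toL1_le

end Graphon

lemma measSupport_eq_support (μ : Measure Graphon) : measSupport μ = μ.support := by
  ext W
  rw [Measure.mem_support_iff_forall]
  refine ⟨fun h U hU => ?_, fun h s hs hW => h s (hs.mem_nhds hW)⟩
  obtain ⟨s, hsU, hs, hW⟩ := mem_nhds_iff.1 hU
  exact (h s hs hW).trans_le (measure_mono hsU)

lemma ae_mem_measSupport (μ : Measure Graphon) : ∀ᵐ W ∂μ, W ∈ measSupport μ := by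
  rw [measSupport_eq_support]
  exact μ.support_mem_ae

end Support

section EntropyOfGraphons

lemma measurable_graphonEnt : Measurable fun W : Graphon => graphonEnt W.1 :=
  measurable_of_tendsto_metrizable
    (fun m => (continuous_minCodeLength (Fin (m + 1)) (gridParams m)).measurable)
    (tendsto_pi_nhds.2 fun W => tendsto_minCodeLength W.2)

lemma integral_graphonEnt_le_sSup (μ : Measure Graphon) [IsProbabilityMeasure μ] :
    ∫ W, graphonEnt W.1 ∂μ ≤ sSup ((fun W : Graphon => graphonEnt W.1) '' measSupport μ) := by
  have hbdd : BddAbove ((fun W : Graphon => graphonEnt W.1) '' measSupport μ) :=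
    ⟨1, forall_mem_image.2 fun W _ => graphonEnt_le_one W.2⟩
  have hle : ∀ᵐ W ∂μ, graphonEnt W.1 ≤ sSup ((fun W => graphonEnt W.1) '' measSupport μ) :=
    (ae_mem_measSupport μ).mono fun W hW => le_csSup hbdd ⟨W, hW, rfl⟩
  have hint : Integrable (fun W : Graphon => graphonEnt W.1) μ :=
    .of_mem_Icc 0 1 measurable_graphonEnt.aemeasurable
      (ae_of_all _ fun W => ⟨graphonEnt_nonneg W.2, graphonEnt_le_one W.2⟩)
  simpa only [integral_const, probReal_univ, one_smul] using
    integral_mono_ae hint (integrable_const _) hle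

end EntropyOfGraphons

section Limsup

lemma choose2_nonneg (n : ℕ) : 0 ≤ choose2 n := by
  rcases n.eq_zero_or_pos with rfl | hn
  · simp [choose2]
  · have hn' : (1 : ℝ) ≤ n := by exact_mod_cast hn
    exact div_nonneg (mul_nonneg n.cast_nonneg (sub_nonneg.2 hn')) two_pos.le

lemma graphEntropy_nonneg {n : ℕ} (ν : Measure (SimpleGraph (Fin n))) [IsProbabilityMeasure ν] :
    0 ≤ graphEntropy ν :=
  Finset.sum_nonneg fun G _ => neg_nonneg.2 <| mul_nonpos_of_nonneg_of_nonpos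
    ENNReal.toReal_nonneg (Real.logb_nonpos one_lt_two ENNReal.toReal_nonneg
      (measureReal_le_one (s := {G})))

lemma tendsto_linear_add_sq_div_choose2 (a b : ℝ) {J : ℕ → ℝ} {I : ℝ}
    (hJ : Tendsto J atTop (nhds I)) :
    Tendsto (fun n : ℕ => (n * a + b + (n : ℝ) ^ 2 / 2 * J n) / choose2 n) atTop (nhds I) := by
  have hinv : Tendsto (fun n : ℕ => (n : ℝ)⁻¹) atTop (nhds 0) :=
    tendsto_inv_atTop_nhds_zero_nat
  have hinv' : Tendsto (fun n : ℕ => ((n : ℝ) - 1)⁻¹) atTop (nhds 0) :=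
    tendsto_inv_atTop_zero.comp
      (tendsto_atTop_add_const_right _ (-1) tendsto_natCast_atTop_atTop)
  have hlim : Tendsto (fun n : ℕ => 2 * a * ((n : ℝ) - 1)⁻¹ +
      2 * b * ((n : ℝ)⁻¹ * ((n : ℝ) - 1)⁻¹) + (1 + ((n : ℝ) - 1)⁻¹) * J n) atTop (nhds I) := by
    simpa using ((hinv'.const_mul (2 * a)).add ((hinv.mul hinv').const_mul (2 * b))).add
      ((hinv'.const_add 1).mul hJ)
  refine hlim.congr' ?_
  filter_upwards [eventually_ge_atTop 2] with n hn
  have hn' : (2 : ℝ) ≤ n := by exact_mod_cast hn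
  have h₀ : (n : ℝ) ≠ 0 := by linarith
  have h₁ : (n : ℝ) - 1 ≠ 0 := by linarith
  unfold choose2
  field_simp
  ring

lemma limsup_graphEntropy_div_le_integral_minCodeLength (ι : Type*) [MeasurableSpace ι]
    [Finite ι] [MeasurableSingletonClass ι] [Nonempty ι] (Q : Finset (Ioo (0 : ℝ) 1)) [Nonempty Q]
    (μn : ∀ n : ℕ, Measure (SimpleGraph (Fin n))) [∀ n, IsProbabilityMeasure (μn n)]
    {μ : Measure Graphon}
    (hlim : Tendsto (fun n => ∫ W, minCodeLength ι Q W.1 ∂((μn n).map graphonMap)) atTop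
      (nhds (∫ W, minCodeLength ι Q W.1 ∂μ))) :
    limsup (fun n => graphEntropy (μn n) / choose2 n) atTop ≤ ∫ W, minCodeLength ι Q W.1 ∂μ := by
  have hbound := tendsto_linear_add_sq_div_choose2 (Real.logb 2 (Nat.card ι))
    (Real.logb 2 (Nat.card (ι → ι → Q))) hlim
  rw [← hbound.limsup_eq]
  refine limsup_le_limsup (.of_forall fun n => ?_) ?_ hbound.isBoundedUnder_le
  · exact div_le_div_of_nonneg_right (graphEntropy_le ι Q (μn n)) (choose2_nonneg n)
  · exact (isBoundedUnder_of ⟨0, fun n =>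
      div_nonneg (graphEntropy_nonneg _) (choose2_nonneg n)⟩).isCoboundedUnder_le

lemma tendsto_integral_minCodeLength (μ : Measure Graphon) [IsFiniteMeasure μ] :
    Tendsto (fun m : ℕ => ∫ W, minCodeLength (Fin (m + 1)) (gridParams m) W.1 ∂μ) atTop
      (nhds (∫ W, graphonEnt W.1 ∂μ)) := by
  refine tendsto_integral_of_dominated_convergence (fun _ => 1)
    (fun m => (continuous_minCodeLength _ _).measurable.aestronglyMeasurable)
    (integrable_const _) (fun m => ae_of_all _ fun W => ?_)
    (ae_of_all _ fun W => tendsto_minCodeLength W.2)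
  rw [Real.norm_of_nonneg (minCodeLength_nonneg W.2)]
  exact minCodeLength_le_one (half_mem_gridParams m) W.2

end Limsup

theorem stmt13_general (μn : ∀ n : ℕ, Measure (SimpleGraph (Fin n)))
    [∀ n, IsProbabilityMeasure (μn n)] (μ : Measure Graphon) [IsFiniteMeasure μ]
    (hconv : ∀ f : Graphon → ℝ, Continuous f → (∃ C : ℝ, ∀ W, |f W| ≤ C) →
      Tendsto (fun n => ∫ W, f W ∂((μn n).map graphonMap)) atTop (nhds (∫ W, f W ∂μ))) :
    limsup (fun n => graphEntropy (μn n) / choose2 n) atTop ≤ ∫ W, graphonEnt W.1 ∂μ := by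
  refine ge_of_tendsto' (tendsto_integral_minCodeLength μ) fun m => ?_
  refine limsup_graphEntropy_div_le_integral_minCodeLength _ _ μn
    (hconv _ (continuous_minCodeLength _ _) ⟨1, fun W => ?_⟩)
  rw [abs_of_nonneg (minCodeLength_nonneg W.2)]
  exact minCodeLength_le_one (half_mem_gridParams m) W.2

/-- Theorem 1.8: if the distributions of the random graphons `W_{G_n}`
converge weakly to `μ`, then `limsup_n H(G_n)/C(n,2) ≤ sup_{W ∈ supp(μ)} Ent(W)`. -/
theorem stmt13 (μn : ∀ n : ℕ, Measure (SimpleGraph (Fin n)))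
    (hprob : ∀ n, IsProbabilityMeasure (μn n))
    (μ : Measure Graphon) (hμ : IsProbabilityMeasure μ)
    (hconv : ∀ f : Graphon → ℝ, Continuous f → (∃ C : ℝ, ∀ W, |f W| ≤ C) →
      Filter.Tendsto (fun n => ∫ W, f W ∂((μn n).map graphonMap)) Filter.atTop
        (nhds (∫ W, f W ∂μ))) :
    Filter.limsup (fun n => graphEntropy (μn n) / choose2 n) Filter.atTop ≤
      sSup ((fun W : Graphon => graphonEnt W.1) '' measSupport μ) :=
  (stmt13_general μn μ hconv).trans (integral_graphonEnt_le_sSup μ)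

end
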